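/- arXiv:2512.01900 — 5 statements merged into one kernel-verified Lean document; each statement's English description precedes it below -/
import Mathlib

section
/- Let F be an extended k-labeled forest and d = (H₀, J, L) an extension datum, and suppose the glueing H = Glue(F; d) contains a cycle. Then H contains a simple cycle C' such that (i) for every connected component D of F, the vertices of D lying on C' occur as a (possibly empty) contiguous segment of C', and (ii) for every vector v ∈ {0,1,2}^{{0,…,k}}, at most two connected components D of F with labv(D) = v contain a vertex of C'. -/
/-- A `k`-labeled graph: a finite simple graph whose vertices are labeled with
labels in `{0, 1, …, k}`. -/
structure LGraph (k : ℕ) where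
  V : Type
  fintype : Fintype V
  G : SimpleGraph V
  lab : V → Fin (k + 1)

/-- An extension datum `d = (H₀, J, L)`: a finite simple forest `H₀` on a vertex set `W`,
a symmetric irreflexive relation `J` on the labels `{1, …, k}`, and a map assigning to each
vertex of `W` a set of labels in `{1, …, k}`. -/
structure ExtDatum (k : ℕ) where
  W : Type
  finW : Finite W
  H0 : SimpleGraph W
  H0acyc : H0.IsAcyclic
  J : Fin (k + 1) → Fin (k + 1) → Prop
  Jsymm : ∀ i j, J i j → J j i
  Jirrefl : ∀ i, ¬ J i i
  Jpos : ∀ i j, J i j → i ≠ 0 ∧ j ≠ 0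
  L : W → Set (Fin (k + 1))
  Lpos : ∀ w, (0 : Fin (k + 1)) ∉ L w

/-- The glueing `Glue(F; d)` of a labeled graph `F` with an extension datum `d`. -/
def glue {k : ℕ} (F : LGraph k) (d : ExtDatum k) : SimpleGraph (F.V ⊕ d.W) :=
  SimpleGraph.fromRel fun x y =>
    match x, y with
    | Sum.inl u, Sum.inl v => F.G.Adj u v ∨ d.J (F.lab u) (F.lab v)
    | Sum.inl u, Sum.inr w => F.lab u ∈ d.L w
    | Sum.inr w, Sum.inr w' => d.H0.Adj w w'
    | _, _ => False

/-- The type `labv(D)` of a set of vertices: the number of vertices of each label, capped at 2. -/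
noncomputable def labv {k : ℕ} (F : LGraph k) (D : Set F.V) : Fin (k + 1) → ℕ :=
  fun j => min 2 (Set.ncard {v | v ∈ D ∧ F.lab v = j})

/-!
Among all cycles of the glueing choose one with the fewest *crossings*, i.e. edges that are not
edges of `F`. If it visited a component `D` of `F` in two separate segments, a path inside `D` would
shortcut it. The edges outside `F` depend only on labels, so a crossing `pq` can be exchanged for
`px` with `x` of the same label as `q`; if `x` lies in a component `D` met by the cycle and neither
`p` nor `q` does, closing up through `D` saves a crossing, unless `px` is already on the cycle. For
three components with the same labels these forced edges exceed the two edges by which the cycle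
can leave a component or a vertex.
-/

section Crossings

open SimpleGraph Walk

variable {V ι : Type*} {E H : SimpleGraph V} {lab : V → ι} {u v : V}

open Classical in
/-- The number of edges of a walk in `H` that do not belong to the base graph `E`, counted with
multiplicity. -/
noncomputable def crossings (E : SimpleGraph V) (p : H.Walk u v) : ℕ :=
  p.edges.countP (· ∉ E.edgeSet)

theorem crossings_append {w : V} (p : H.Walk u v) (q : H.Walk v w) :
    crossings E (p.append q) = crossings E p + crossings E q := by
  simp only [crossings, edges_append, List.countP_append]

theorem crossings_cons_le {w : V} (h : H.Adj u v) (p : H.Walk v w) :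
    crossings E (cons h p) ≤ crossings E p + 1 := by
  simp only [crossings, edges_cons, List.countP_cons]
  split <;> omega

theorem crossings_cons_of_not_adj {w : V} (h : H.Adj u v) (hE : ¬ E.Adj u v) (p : H.Walk v w) :
    crossings E (cons h p) = crossings E p + 1 := by
  simp [crossings, hE]

theorem crossings_eq_of_edges_perm {x y : V} {p : H.Walk u v} {q : H.Walk x y}
    (h : p.edges.Perm q.edges) : crossings E p = crossings E q :=
  h.countP_eq _

theorem crossings_eq_zero_iff {p : H.Walk u v} :
    crossings E p = 0 ↔ ∀ e ∈ p.edges, e ∈ E.edgeSet := by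
  simp [crossings, List.countP_eq_zero]

theorem reachable_of_crossings_eq_zero {p : H.Walk u v} (h : crossings E p = 0) :
    E.Reachable u v :=
  ⟨p.transfer E (crossings_eq_zero_iff.1 h)⟩

theorem reachable_of_mem_edges_of_crossings_eq_zero {p : H.Walk u v} (h : crossings E p = 0)
    {x y : V} (hxy : s(x, y) ∈ p.edges) : E.Reachable x y :=
  Adj.reachable (crossings_eq_zero_iff.1 h _ hxy)

theorem exists_walk_crossings_eq_zero (hEH : E ≤ H) (h : E.Reachable u v) :
    ∃ p : H.Walk u v, crossings E p = 0 := by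
  obtain ⟨p⟩ := h
  refine ⟨p.mapLe hEH, crossings_eq_zero_iff.2 fun e he ↦ ?_⟩
  rw [edges_mapLe_eq_edges] at he
  exact p.edges_subset_edgeSet he

theorem reachable_of_mem_support_of_crossings_eq_zero {p : H.Walk u v} (h : crossings E p = 0)
    {x : V} (hx : x ∈ p.support) : E.Reachable x v := by
  obtain ⟨q, r, rfl⟩ := mem_support_iff_exists_append.1 hx
  rw [crossings_append] at h
  exact reachable_of_crossings_eq_zero (p := r) (by omega)

theorem exists_isCycle_cons_of_mem_darts {c : H.Walk u u} (hc : c.IsCycle) {d : H.Dart}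
    (hd : d ∈ c.darts) :
    ∃ w : H.Walk d.snd d.fst, (cons d.adj w).IsCycle ∧ w.support ~r c.support.tail ∧
      (cons d.adj w).edges.Perm c.edges := by
  obtain ⟨p, q, rfl⟩ := (isSubwalk_toWalk_adj_iff_mem_darts c).2 hd
  have hsupport : (q.append p).support ~r
      ((p.append d.adj.toWalk).append q).support.tail := by
    simpa [support_append, tail_support_append, cons_tail_support] using
      (List.isRotated_append (l := q.support) (l' := p.support.tail))
  have hedges : (cons d.adj (q.append p)).edges.Perm
      ((p.append d.adj.toWalk).append q).edges := by
    simpa using (List.perm_append_comm (l₁ := s(d.fst, d.snd) :: q.edges) (l₂ := p.edges))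
  refine ⟨q.append p, (cons_isCycle_iff _ _).2 ⟨?_, ?_⟩, hsupport, hedges⟩
  · exact (isPath_def _).2 (hsupport.nodup_iff.2 hc.support_nodup)
  · exact (List.nodup_cons.1 (hedges.nodup_iff.2 hc.edges_nodup)).1

theorem eq_of_isCycle_of_mem_edges {c : H.Walk u u} (hc : c.IsCycle) {p x y z : V}
    (hx : s(p, x) ∈ c.edges) (hy : s(p, y) ∈ c.edges) (hz : s(p, z) ∈ c.edges) (hxy : x ≠ y)
    (hxz : x ≠ z) : y = z := by
  have hcard : (c.toSubgraph.neighborSet p).ncard = 2 :=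
    hc.ncard_neighborSet_toSubgraph_eq_two (c.fst_mem_support_of_mem_edges hx)
  by_contra hyz
  have hfin := Set.finite_of_ncard_pos (hcard ▸ zero_lt_two)
  refine hcard.not_gt ((Set.two_lt_ncard_iff hfin).2 ⟨x, y, z, ?_, ?_, ?_, hxy, hxz, hyz⟩) <;>
    rwa [Subgraph.mem_neighborSet, adj_toSubgraph_iff_mem_edges]

theorem exists_mem_darts_leaving {c : H.Walk u u} {S : Set V} {x y : V} (hx : x ∈ c.support)
    (hy : y ∈ c.support) (hxS : x ∈ S) (hyS : y ∉ S) :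
    ∃ d ∈ c.darts, d.fst ∈ S ∧ d.snd ∉ S := by
  classical
  have hy' : y ∈ (c.rotate x hx).support := (mem_support_rotate_iff c x hx).2 hy
  obtain ⟨d, hd, hdS⟩ := ((c.rotate x hx).takeUntil y hy').exists_boundary_dart S hxS hyS
  exact ⟨d, (rotate_darts c x hx).mem_iff.1 (darts_takeUntil_subset_darts _ hy' hd), hdS⟩

theorem exists_append_of_end_mem (w : H.Walk u v) {S : Set V} (hv : v ∈ S) :
    ∃ (x : V) (w₁ : H.Walk u x) (w₂ : H.Walk x v), w = w₁.append w₂ ∧ x ∈ S ∧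
      ∀ y ∈ w₁.support, y ∈ S → y = x := by
  classical
  obtain ⟨x, hxS, hx, hfirst⟩ :=
    w.exists_mem_support_forall_mem_support_imp_eq {y ∈ w.support.toFinset | y ∈ S}
      ⟨v, by simp [hv]⟩
  refine ⟨x, w.takeUntil x hx, w.dropUntil x hx, (w.take_spec hx).symm, by simp_all, ?_⟩
  intro y hy hyS
  have hyw : y ∈ w.support := support_takeUntil_subset_support w hx hy
  exact hfirst y (by simp [hyw, hyS]) hy

theorem mem_supp_iff_of_reachable (D : E.ConnectedComponent) {x y : V} (h : E.Reachable x y) :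
    x ∈ D.supp ↔ y ∈ D.supp := by
  rw [ConnectedComponent.mem_supp_iff, ConnectedComponent.mem_supp_iff,
    ConnectedComponent.sound h]

theorem notMem_supp_of_ne {D D' : E.ConnectedComponent} (hne : D ≠ D') {x : V}
    (hx : x ∈ D.supp) : x ∉ D'.supp :=
  fun hx' ↦ hne (ConnectedComponent.eq_of_common_vertex hx hx')

theorem not_adj_of_notMem_supp {D : E.ConnectedComponent} {x y : V} (hx : x ∈ D.supp)
    (hy : y ∉ D.supp) : ¬ E.Adj x y :=
  fun h ↦ hy ((mem_supp_iff_of_reachable D h.reachable).1 hx)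

/-- A cycle of `H` that uses as few edges outside the base graph `E` as any cycle of `H`. -/
structure IsMinCrossingCycle (E : SimpleGraph V) (c : H.Walk u u) : Prop where
  isCycle : c.IsCycle
  crossings_le : ∀ ⦃x : V⦄ (c' : H.Walk x x), c'.IsCycle → crossings E c ≤ crossings E c'

theorem exists_isMinCrossingCycle (h : ¬ H.IsAcyclic) :
    ∃ (x : V) (c : H.Walk x x), IsMinCrossingCycle E c := by
  simp only [IsAcyclic, not_forall, not_not] at h
  obtain ⟨x, c, hc⟩ := h
  let cycles : Set (Σ x : V, H.Walk x x) := {c | c.2.IsCycle}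
  have hne : cycles.Nonempty := ⟨⟨x, c⟩, hc⟩
  let f : (Σ x : V, H.Walk x x) → ℕ := fun c ↦ crossings E c.2
  exact ⟨_, _, Function.argminOn_mem f cycles hne,
    fun y c' hc' ↦ Function.argminOn_le f cycles (a := ⟨y, c'⟩) hc'⟩

/-- The edges of the walk `c` with exactly one end in the component `D`, that end coming first. -/
def boundaryPairs (c : H.Walk u u) (D : E.ConnectedComponent) : Set (V × V) :=
  {e | s(e.1, e.2) ∈ c.edges ∧ e.1 ∈ D.supp ∧ e.2 ∉ D.supp}

/-- `H` arises from `E` by adding edges whose presence depends only on the labels of their ends. -/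
structure IsLabelExtension (E H : SimpleGraph V) (lab : V → ι) : Prop where
  le : E ≤ H
  adj_of_lab_eq : ∀ ⦃p q x : V⦄, H.Adj p q → ¬ E.Adj p q → lab x = lab q → H.Adj p x

theorem IsLabelExtension.lab_ne (hH : IsLabelExtension E H lab) {p q : V}
    (h : H.Adj p q) (hE : ¬ E.Adj p q) : lab p ≠ lab q :=
  fun heq ↦ H.irrefl (hH.adj_of_lab_eq h hE heq)

namespace IsMinCrossingCycle

variable {c : H.Walk u u}

theorem of_edges_perm (hc : IsMinCrossingCycle E c) {x : V} {c' : H.Walk x x}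
    (hc' : c'.IsCycle) (h : c'.edges.Perm c.edges) : IsMinCrossingCycle E c' where
  isCycle := hc'
  crossings_le _ _ hd := (crossings_eq_of_edges_perm h).trans_le (hc.crossings_le _ hd)

theorem reverse (hc : IsMinCrossingCycle E c) : IsMinCrossingCycle E c.reverse :=
  hc.of_edges_perm hc.isCycle.reverse (by rw [edges_reverse]; exact c.edges.reverse_perm)

theorem crossings_le_cons (hc : IsMinCrossingCycle E c) {x y : V} (h : H.Adj x y)
    (p : H.Walk y x) (hp : s(x, y) ∉ p.edges) : crossings E c ≤ crossings E (cons h p) := by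
  classical
  have hcycle : (cons h p.bypass).IsCycle :=
    (cons_isCycle_iff _ _).2 ⟨p.bypass_isPath, fun he ↦ hp (p.edges_bypass_subset_edges he)⟩
  refine (hc.crossings_le _ hcycle).trans (List.Sublist.countP_le ?_)
  exact p.edges_bypass_sublist_edges.cons_cons _

theorem exists_cons_of_mem_darts (hc : IsMinCrossingCycle E c) {d : H.Dart} (hd : d ∈ c.darts) :
    ∃ w : H.Walk d.snd d.fst, IsMinCrossingCycle E (cons d.adj w) ∧
      w.support ~r c.support.tail ∧ (cons d.adj w).edges.Perm c.edges := by
  obtain ⟨w, hw, hsupport, hedges⟩ := exists_isCycle_cons_of_mem_darts hc.isCycle hd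
  exact ⟨w, hc.of_edges_perm hw hedges, hsupport, hedges⟩

theorem exists_cons_of_mem_edges (hc : IsMinCrossingCycle E c) {x y : V}
    (hxy : s(x, y) ∈ c.edges) :
    ∃ (h : H.Adj x y) (w : H.Walk y x), IsMinCrossingCycle E (cons h w) ∧
      c.support ⊆ w.support ∧ (cons h w).edges.Perm c.edges := by
  have h : H.Adj x y := c.adj_of_mem_edges hxy
  have key {c' : H.Walk u u} (hc' : IsMinCrossingCycle E c')
      (hd : (⟨(x, y), h⟩ : H.Dart) ∈ c'.darts) :
      ∃ w : H.Walk y x, IsMinCrossingCycle E (cons h w) ∧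
        c'.support ⊆ w.support ∧ (cons h w).edges.Perm c'.edges := by
    obtain ⟨w, hw, hsupport, hedges⟩ := hc'.exists_cons_of_mem_darts hd
    refine ⟨w, hw, fun z hz ↦ hsupport.mem_iff.2 ?_, hedges⟩
    rcases (mem_support_iff c').1 hz with rfl | hz
    · exact end_mem_tail_support hc'.isCycle.not_nil
    · exact hz
  refine ⟨h, ?_⟩
  rcases (isSubwalk_toWalk_iff_mem_edges h).2 hxy with hsub | hsub
  · exact key hc ((isSubwalk_toWalk_iff_mem_darts _ _).1 hsub)
  · have hd : (⟨(y, x), h.symm⟩ : H.Dart) ∈ c.darts :=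
      (isSubwalk_toWalk_iff_mem_darts c h.symm).1 hsub
    obtain ⟨w, hw, hsupport, hedges⟩ := key hc.reverse (mem_darts_reverse.2 hd)
    rw [support_reverse] at hsupport
    rw [edges_reverse] at hedges
    exact ⟨w, hw, fun z hz ↦ hsupport (List.mem_reverse.2 hz),
      hedges.trans c.edges.reverse_perm⟩

-- If the cycle left `D` a second time, a shortcut inside `D` would save crossings.
theorem exists_append_of_boundary (hEH : E ≤ H) {D : E.ConnectedComponent} {x y : V}
    {h : H.Adj x y} {w : H.Walk y x} (hc : IsMinCrossingCycle E (cons h w)) (hx : x ∈ D.supp)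
    (hy : y ∉ D.supp) :
    ∃ (z : V) (w₁ : H.Walk y z) (w₂ : H.Walk z x), w = w₁.append w₂ ∧ z ∈ D.supp ∧
      (∀ a ∈ w₁.support, a ∈ D.supp → a = z) ∧ crossings E w₂ = 0 := by
  obtain ⟨z, w₁, w₂, rfl, hz, hfirst⟩ := exists_append_of_end_mem w hx
  refine ⟨z, w₁, w₂, rfl, hz, hfirst, ?_⟩
  have hxy : ¬ E.Reachable x y := fun hr ↦ hy ((mem_supp_iff_of_reachable D hr).1 hx)
  obtain ⟨m, hm⟩ := exists_walk_crossings_eq_zero hEH (D.reachable_of_mem_supp hz hx)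
  have hw₁ : s(x, y) ∉ w₁.edges := fun he ↦
    ((cons_isCycle_iff _ _).1 hc.isCycle).2 (by simp [he])
  have hshort : s(x, y) ∉ (w₁.append m).edges := by
    rw [edges_append, List.mem_append, not_or]
    exact ⟨hw₁, fun he ↦ hxy (reachable_of_mem_edges_of_crossings_eq_zero hm he)⟩
  have hle := hc.crossings_le_cons h _ hshort
  have hadj : ¬ E.Adj x y := fun hE ↦ hxy hE.reachable
  simp only [crossings_cons_of_not_adj h hadj, crossings_append] at hle
  omega

theorem exists_isRotated_append (hEH : E ≤ H) (hc : IsMinCrossingCycle E c)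
    (D : E.ConnectedComponent) :
    ∃ l₁ l₂ : List V, c.support.tail ~r l₁ ++ l₂ ∧ (∀ y ∈ l₁, y ∈ D.supp) ∧
      ∀ y ∈ l₂, y ∉ D.supp := by
  by_cases hin : ∀ y ∈ c.support, y ∈ D.supp
  · exact ⟨c.support.tail, [], by rw [List.append_nil],
      fun y hy ↦ hin y (List.mem_of_mem_tail hy), by simp⟩
  by_cases hout : ∀ y ∈ c.support, y ∉ D.supp
  · exact ⟨[], c.support.tail, by rw [List.nil_append], by simp,
      fun y hy ↦ hout y (List.mem_of_mem_tail hy)⟩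
  push Not at hin hout
  obtain ⟨b, hb, hbD⟩ := hin
  obtain ⟨a, ha, haD⟩ := hout
  obtain ⟨d, hd, hfst, hsnd⟩ := exists_mem_darts_leaving ha hb haD hbD
  obtain ⟨w, hw, hsupport, -⟩ := hc.exists_cons_of_mem_darts hd
  obtain ⟨z, w₁, w₂, rfl, -, hfirst, hw₂⟩ := hw.exists_append_of_boundary hEH hfst hsnd
  refine ⟨w₂.support, w₁.support.dropLast, ?_, fun y hy ↦ ?_, fun y hy hyD ↦ ?_⟩
  · rw [support_append_eq_support_dropLast_append] at hsupport
    exact hsupport.symm.trans List.isRotated_append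
  · have hr := reachable_of_mem_support_of_crossings_eq_zero hw₂ hy
    exact (mem_supp_iff_of_reachable D hr).2 hfst
  · obtain rfl := hfirst y (List.mem_of_mem_dropLast hy) hyD
    have hpath : w₁.IsPath := ((cons_isCycle_iff _ _).1 hw.isCycle).1.of_append_left
    have hnodup := hpath.support_nodup
    rw [← dropLast_support_concat, List.nodup_append] at hnodup
    exact hnodup.2.2 y hy y (List.mem_singleton_self y) rfl

theorem eq_of_mem_boundaryPairs (hEH : E ≤ H) (hc : IsMinCrossingCycle E c)
    {D : E.ConnectedComponent} {e₁ e₂ e₃ : V × V} (h₁ : e₁ ∈ boundaryPairs c D)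
    (h₂ : e₂ ∈ boundaryPairs c D) (h₃ : e₃ ∈ boundaryPairs c D) (h₁₂ : e₁ ≠ e₂) (h₁₃ : e₁ ≠ e₃) :
    e₂ = e₃ := by
  obtain ⟨h, w, hw, -, hedges⟩ := hc.exists_cons_of_mem_edges h₁.1
  obtain ⟨z, w₁, w₂, rfl, -, hfirst, hw₂⟩ := hw.exists_append_of_boundary hEH h₁.2.1 h₁.2.2
  have hpath : w₁.IsPath := ((cons_isCycle_iff _ _).1 hw.isCycle).1.of_append_left
  have eq_last {e : V × V} (he : e ∈ boundaryPairs c D) (hne : e₁ ≠ e) :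
      e = (z, w₁.penultimate) := by
    obtain ⟨a, b⟩ := e
    obtain ⟨hmem, ha, hb⟩ := he
    have hne' : s(a, b) ≠ s(e₁.1, e₁.2) := by
      rw [Ne, Sym2.eq_iff]
      rintro (⟨rfl, rfl⟩ | ⟨rfl, -⟩)
      · exact hne rfl
      · exact h₁.2.2 ha
    have hmem₂ : s(a, b) ∉ w₂.edges := fun hmem₂ ↦
      hb ((mem_supp_iff_of_reachable D
        (reachable_of_mem_edges_of_crossings_eq_zero hw₂ hmem₂)).1 ha)
    have hmem₁ : s(a, b) ∈ w₁.edges := by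
      have := hedges.mem_iff.2 hmem
      simpa [hne', hmem₂] using this
    obtain rfl := hfirst a (w₁.fst_mem_support_of_mem_edges hmem₁) ha
    rw [← hpath.eq_penultimate_of_mem_edges hmem₁]
  rw [eq_last h₂ h₁₂, eq_last h₃ h₁₃]

-- Otherwise `p` could be joined to `x` instead of `q`, and the cycle closed inside `D`.
theorem exists_mem_edges_of_lab_mem_image (hH : IsLabelExtension E H lab)
    (hc : IsMinCrossingCycle E c) {D : E.ConnectedComponent} (hD : ∃ a ∈ D.supp, a ∈ c.support)
    {p q : V} (hpq : s(p, q) ∈ c.edges) (hE : ¬ E.Adj p q) (hp : p ∉ D.supp) (hq : q ∉ D.supp)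
    (hlab : lab q ∈ lab '' D.supp) : ∃ x ∈ D.supp, lab x = lab q ∧ s(p, x) ∈ c.edges := by
  obtain ⟨x, hx, hxq⟩ := hlab
  obtain ⟨a, ha, hac⟩ := hD
  refine ⟨x, hx, hxq, ?_⟩
  obtain ⟨h, w, hw, hsupport, hedges⟩ := hc.exists_cons_of_mem_edges hpq
  obtain ⟨w₁, w₂, rfl⟩ := mem_support_iff_exists_append.1 (hsupport hac)
  by_contra hpx
  obtain ⟨m, hm⟩ := exists_walk_crossings_eq_zero hH.le (D.reachable_of_mem_supp hx ha)
  have hclose : s(p, x) ∉ (m.append w₂).edges := by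
    rw [edges_append, List.mem_append, not_or]
    refine ⟨fun he ↦ hp ?_, fun he ↦ hpx (hedges.mem_iff.1 (by simp [he]))⟩
    exact (mem_supp_iff_of_reachable D (reachable_of_mem_edges_of_crossings_eq_zero hm he)).2 hx
  have hle := (hw.crossings_le_cons (hH.adj_of_lab_eq h hE hxq) _ hclose).trans
    (crossings_cons_le _ _)
  have hw₁ : crossings E w₁ ≠ 0 := fun h₀ ↦
    hq ((mem_supp_iff_of_reachable D (reachable_of_crossings_eq_zero h₀)).2 ha)
  simp only [crossings_cons_of_not_adj h hE, crossings_append] at hle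
  omega

-- Exchanging along `pq`, along `qp`, and then along the edge gained from `pq`, forces a third
-- boundary pair of `D`.
theorem notMem_edges_of_lab_image_eq (hH : IsLabelExtension E H lab)
    (hc : IsMinCrossingCycle E c) {D D' : E.ConnectedComponent} (hne : D ≠ D')
    (hD' : ∃ a ∈ D'.supp, a ∈ c.support) (himage : lab '' D.supp = lab '' D'.supp) {p q : V}
    (hp : p ∉ D.supp) (hp' : p ∉ D'.supp) (hlab : lab p ∈ lab '' D.supp) (hq : q ∈ D.supp) :
    s(p, q) ∉ c.edges := by
  intro hpq
  have hqp : s(q, p) ∈ c.edges := by rwa [Sym2.eq_swap]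
  have hE : ¬ E.Adj q p := not_adj_of_notMem_supp hq hp
  have hq' : q ∉ D'.supp := notMem_supp_of_ne hne hq
  have hD : ∃ a ∈ D.supp, a ∈ c.support := ⟨q, hq, c.fst_mem_support_of_mem_edges hqp⟩
  obtain ⟨y, hy, hyq, hpy⟩ := hc.exists_mem_edges_of_lab_mem_image hH hD' hpq
    (fun h ↦ hE h.symm) hp' hq' (himage ▸ Set.mem_image_of_mem lab hq)
  obtain ⟨y', hy', hy'p, hqy'⟩ :=
    hc.exists_mem_edges_of_lab_mem_image hH hD' hqp hE hq' hp' (himage ▸ hlab)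
  have hyD : y ∉ D.supp := notMem_supp_of_ne hne.symm hy
  obtain ⟨x, hx, -, hyx⟩ := hc.exists_mem_edges_of_lab_mem_image hH hD
    (Sym2.eq_swap ▸ hpy) (not_adj_of_notMem_supp hy hp') hyD hp hlab
  have hpair : (q, y') = (x, y) := by
    refine hc.eq_of_mem_boundaryPairs hH.le (D := D) (e₁ := (q, p)) ⟨hqp, hq, hp⟩
      ⟨hqy', hq, notMem_supp_of_ne hne.symm hy'⟩ ⟨Sym2.eq_swap ▸ hyx, hx, hyD⟩ ?_ ?_
    · rintro ⟨⟩
      exact hp' hy'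
    · rintro ⟨⟩
      exact hp' hy
  obtain ⟨rfl, rfl⟩ := Prod.mk.inj hpair
  exact hH.lab_ne (c.adj_of_mem_edges hqp) hE (hyq.symm.trans hy'p)

theorem eq_or_eq_or_eq_of_lab_image_eq (hH : IsLabelExtension E H lab)
    (hc : IsMinCrossingCycle E c) {D₁ D₂ D₃ : E.ConnectedComponent}
    (hD₁ : ∃ a ∈ D₁.supp, a ∈ c.support) (hD₂ : ∃ a ∈ D₂.supp, a ∈ c.support)
    (hD₃ : ∃ a ∈ D₃.supp, a ∈ c.support) (h₁₂ : lab '' D₁.supp = lab '' D₂.supp)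
    (h₂₃ : lab '' D₂.supp = lab '' D₃.supp) : D₁ = D₂ ∨ D₁ = D₃ ∨ D₂ = D₃ := by
  by_contra! ⟨hne₁₂, hne₁₃, hne₂₃⟩
  have ⟨a₁, ha₁, hac₁⟩ := hD₁
  obtain ⟨a₂, ha₂, hac₂⟩ := hD₂
  obtain ⟨⟨⟨q, p⟩, h⟩, hd, hq, hp⟩ :=
    exists_mem_darts_leaving hac₂ hac₁ ha₂ (notMem_supp_of_ne hne₁₂ ha₁)
  have hpq : s(p, q) ∈ c.edges := Sym2.eq_swap ▸ List.mem_map_of_mem hd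
  have hE : ¬ E.Adj p q := fun hE ↦ not_adj_of_notMem_supp hq hp hE.symm
  have hlabq : lab q ∈ lab '' D₂.supp := Set.mem_image_of_mem lab hq
  have hp₁ : p ∉ D₁.supp := fun hp₁ ↦
    hc.notMem_edges_of_lab_image_eq hH hne₂₃ hD₃ h₂₃ hp (notMem_supp_of_ne hne₁₃ hp₁)
      (h₁₂ ▸ Set.mem_image_of_mem lab hp₁) hq hpq
  have hp₃ : p ∉ D₃.supp := fun hp₃ ↦
    hc.notMem_edges_of_lab_image_eq hH hne₁₂.symm hD₁ h₁₂.symm hp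
      (notMem_supp_of_ne hne₁₃.symm hp₃) (h₂₃ ▸ Set.mem_image_of_mem lab hp₃) hq hpq
  obtain ⟨x₁, hx₁, -, hpx₁⟩ := hc.exists_mem_edges_of_lab_mem_image hH hD₁ hpq hE hp₁
    (notMem_supp_of_ne hne₁₂.symm hq) (h₁₂ ▸ hlabq)
  obtain ⟨x₃, hx₃, -, hpx₃⟩ := hc.exists_mem_edges_of_lab_mem_image hH hD₃ hpq hE hp₃
    (notMem_supp_of_ne hne₂₃ hq) (h₂₃ ▸ hlabq)
  have hq₁ : q ≠ x₁ := fun heq ↦ notMem_supp_of_ne hne₁₂.symm hq (heq ▸ hx₁)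
  have hq₃ : q ≠ x₃ := fun heq ↦ notMem_supp_of_ne hne₂₃ hq (heq ▸ hx₃)
  obtain rfl := eq_of_isCycle_of_mem_edges hc.isCycle hpq hpx₁ hpx₃ hq₁ hq₃
  exact notMem_supp_of_ne hne₁₃ hx₁ hx₃

end IsMinCrossingCycle

end Crossings

section Glue

open SimpleGraph

theorem exists_eq_inl_of_reachable_inl {V W : Type*} {G : SimpleGraph V} {G' : SimpleGraph W}
    {u : V} {x : V ⊕ W} (h : (G ⊕g G').Reachable (Sum.inl u) x) :
    ∃ v, x = Sum.inl v ∧ G.Reachable u v := by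
  rw [reachable_iff_reflTransGen] at h
  induction h with
  | refl => exact ⟨u, rfl, .rfl⟩
  | @tail _ y _ hadj ih =>
    obtain ⟨v, rfl, huv⟩ := ih
    rcases y with w | w
    · exact ⟨w, rfl, huv.trans (Adj.reachable (by simpa using hadj))⟩
    · simp at hadj

theorem supp_map_sumInl {V W : Type*} {G : SimpleGraph V} (G' : SimpleGraph W)
    (D : G.ConnectedComponent) :
    (D.map (Embedding.sumInl (H := G')).toHom).supp = Sum.inl '' D.supp := by
  induction D using ConnectedComponent.ind with | h u =>
  ext x
  simp only [ConnectedComponent.map_mk, ConnectedComponent.mem_supp_iff, Set.mem_image,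
    ConnectedComponent.eq]
  constructor
  · intro h
    obtain ⟨v, rfl, huv⟩ := exists_eq_inl_of_reachable_inl h.symm
    exact ⟨v, huv.symm, rfl⟩
  · rintro ⟨v, hvu, rfl⟩
    exact hvu.map (Embedding.sumInl (H := G')).toHom

theorem map_sumInl_injective {V W : Type*} {G : SimpleGraph V} (G' : SimpleGraph W) :
    Function.Injective fun D : G.ConnectedComponent ↦
      D.map (Embedding.sumInl (H := G')).toHom := by
  intro D D' h
  have hsupp := congrArg ConnectedComponent.supp h
  simp only [supp_map_sumInl] at hsupp
  exact ConnectedComponent.supp_injective (Sum.inl_injective.image_injective hsupp)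

variable {k : ℕ} {F : LGraph k} {d : ExtDatum k}

/-- The graph `F` inside `Glue(F; d)`, with the vertices of `W` isolated: the edges of `H₀` are
treated like the other edges added by the glueing, each vertex of `W` being its own label. -/
abbrev baseGraph (F : LGraph k) (d : ExtDatum k) : SimpleGraph (F.V ⊕ d.W) :=
  F.G ⊕g ⊥

theorem glue_adj_inl_inl {u v : F.V} :
    (glue F d).Adj (Sum.inl u) (Sum.inl v) ↔ F.G.Adj u v ∨ d.J (F.lab u) (F.lab v) := by
  have hne (h : F.G.Adj u v ∨ d.J (F.lab u) (F.lab v)) : u ≠ v := by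
    rintro rfl
    exact h.elim F.G.irrefl (d.Jirrefl _)
  have hsymm (h : F.G.Adj v u ∨ d.J (F.lab v) (F.lab u)) : F.G.Adj u v ∨ d.J (F.lab u) (F.lab v) :=
    h.imp Adj.symm (d.Jsymm _ _)
  simp only [glue, fromRel_adj, ne_eq, Sum.inl.injEq]
  exact ⟨fun h ↦ h.2.elim id hsymm, fun h ↦ ⟨hne h, .inl h⟩⟩

theorem glue_adj_inl_inr {u : F.V} {w : d.W} :
    (glue F d).Adj (Sum.inl u) (Sum.inr w) ↔ F.lab u ∈ d.L w := by
  simp [glue]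

theorem isLabelExtension_glue :
    IsLabelExtension (baseGraph F d) (glue F d) (Sum.map F.lab id) where
  le := by
    rintro (u | w) (v | w') h
    · exact glue_adj_inl_inl.2 (.inl (by simpa using h))
    all_goals simp at h
  adj_of_lab_eq := by
    rintro (p | p) (q | q) (x | x) hpq hE hlab <;>
      simp only [Sum.map_inl, Sum.map_inr, Sum.inl.injEq, Sum.inr.injEq, id, reduceCtorEq] at hlab
    · rw [glue_adj_inl_inl] at hpq ⊢
      exact .inr (hlab ▸ hpq.resolve_left (by simpa using hE))
    · exact hlab ▸ hpq
    · rw [adj_comm, glue_adj_inl_inr] at hpq ⊢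
      exact hlab ▸ hpq
    · exact hlab ▸ hpq

theorem mem_lab_image_iff_labv_ne_zero {S : Set F.V} {j : Fin (k + 1)} :
    j ∈ F.lab '' S ↔ labv F S j ≠ 0 := by
  have := F.fintype
  rw [labv, ← Nat.pos_iff_ne_zero, lt_min_iff, Set.ncard_pos]
  simp [Set.Nonempty]

theorem lab_image_eq_of_labv_eq {S T : Set F.V} (h : labv F S = labv F T) :
    F.lab '' S = F.lab '' T := by
  ext j
  rw [mem_lab_image_iff_labv_ne_zero, mem_lab_image_iff_labv_ne_zero, h]

theorem exists_isRotated_append_glue {x : F.V ⊕ d.W} {c : (glue F d).Walk x x}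
    (hc : IsMinCrossingCycle (baseGraph F d) c) (D : F.G.ConnectedComponent) :
    ∃ l₁ l₂ : List (F.V ⊕ d.W), c.support.tail ~r l₁ ++ l₂ ∧
      (∀ y ∈ l₁, ∃ u, y = Sum.inl u ∧ u ∈ D.supp) ∧
      ∀ y ∈ l₂, ¬ ∃ u, y = Sum.inl u ∧ u ∈ D.supp := by
  have hsupp (y : F.V ⊕ d.W) : (∃ u, y = Sum.inl u ∧ u ∈ D.supp) ↔
      y ∈ (D.map (Embedding.sumInl (H := (⊥ : SimpleGraph d.W))).toHom).supp := by
    rw [supp_map_sumInl, Set.mem_image]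
    exact exists_congr fun u ↦ by rw [and_comm, eq_comm]
  simp only [hsupp]
  exact hc.exists_isRotated_append isLabelExtension_glue.le _

theorem eq_or_eq_or_eq_of_labv_eq {x : F.V ⊕ d.W} {c : (glue F d).Walk x x}
    (hc : IsMinCrossingCycle (baseGraph F d) c) {v : Fin (k + 1) → ℕ}
    {D₁ D₂ D₃ : F.G.ConnectedComponent}
    (h₁ : labv F D₁.supp = v ∧ ∃ u ∈ D₁.supp, Sum.inl u ∈ c.support)
    (h₂ : labv F D₂.supp = v ∧ ∃ u ∈ D₂.supp, Sum.inl u ∈ c.support)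
    (h₃ : labv F D₃.supp = v ∧ ∃ u ∈ D₃.supp, Sum.inl u ∈ c.support) :
    D₁ = D₂ ∨ D₁ = D₃ ∨ D₂ = D₃ := by
  let lift (D : F.G.ConnectedComponent) : (baseGraph F d).ConnectedComponent :=
    D.map Embedding.sumInl.toHom
  have hlift {D D' : F.G.ConnectedComponent} : lift D = lift D' ↔ D = D' :=
    (map_sumInl_injective _).eq_iff
  have himage {D D' : F.G.ConnectedComponent} (h : labv F D.supp = labv F D'.supp) :
      Sum.map F.lab id '' (lift D).supp = Sum.map F.lab id '' (lift D').supp := by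
    simp only [lift, supp_map_sumInl, Set.image_image, Sum.map_inl]
    rw [← Set.image_image Sum.inl, lab_image_eq_of_labv_eq h, Set.image_image]
  have hmeet {D : F.G.ConnectedComponent} (h : ∃ u ∈ D.supp, Sum.inl u ∈ c.support) :
      ∃ a ∈ (lift D).supp, a ∈ c.support := by
    simpa only [lift, supp_map_sumInl, Set.exists_mem_image] using h
  simpa only [hlift] using hc.eq_or_eq_or_eq_of_lab_image_eq isLabelExtension_glue
    (hmeet h₁.2) (hmeet h₂.2) (hmeet h₃.2) (himage (h₁.1.trans h₂.1.symm))
    (himage (h₂.1.trans h₃.1.symm))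

end Glue

theorem cycle_structure_general {k : ℕ} (F : LGraph k) (d : ExtDatum k)
    (hcyc : ¬ (glue F d).IsAcyclic) :
    ∃ (x : F.V ⊕ d.W) (c : (glue F d).Walk x x), c.IsCycle ∧
      (∀ D : F.G.ConnectedComponent, ∃ l₁ l₂ : List (F.V ⊕ d.W),
        List.IsRotated c.support.tail (l₁ ++ l₂) ∧
        (∀ y ∈ l₁, ∃ u, y = Sum.inl u ∧ u ∈ D.supp) ∧
        (∀ y ∈ l₂, ¬ ∃ u, y = Sum.inl u ∧ u ∈ D.supp)) ∧
      (∀ v : Fin (k + 1) → ℕ,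
        Set.ncard {D : F.G.ConnectedComponent |
          labv F D.supp = v ∧ ∃ u ∈ D.supp, Sum.inl u ∈ c.support} ≤ 2) := by
  obtain ⟨x, c, hc⟩ := exists_isMinCrossingCycle (E := baseGraph F d) hcyc
  refine ⟨x, c, hc.isCycle, exists_isRotated_append_glue hc, fun v ↦ ?_⟩
  by_contra! hcard
  have hfin := Set.finite_of_ncard_pos (zero_lt_two.trans hcard)
  obtain ⟨D₁, D₂, D₃, h₁, h₂, h₃, hne₁₂, hne₁₃, hne₂₃⟩ := (Set.two_lt_ncard_iff hfin).1 hcard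
  exact (eq_or_eq_or_eq_of_labv_eq hc h₁ h₂ h₃).elim hne₁₂ (Or.elim · hne₁₃ hne₂₃)

/-- If `F` is an extended `k`-labeled forest (a forest with exactly one
vertex labeled 0) and the glueing `Glue(F; d)` contains a cycle, then it contains a simple
cycle `C'` such that (i) for every connected component `D` of `F` the vertices of `D` on
`C'` occur as a contiguous (possibly empty) segment of `C'`, and (ii) for every type vector
`v`, at most two connected components of `F` of type `v` contain a vertex of `C'`. -/
theorem cycle_structure {k : ℕ} (F : LGraph k) (hF : F.G.IsAcyclic)
    (hzero : ∃! v : F.V, F.lab v = 0)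
    (d : ExtDatum k) (hcyc : ¬ (glue F d).IsAcyclic) :
    ∃ (x : F.V ⊕ d.W) (c : (glue F d).Walk x x), c.IsCycle ∧
      (∀ D : F.G.ConnectedComponent, ∃ l₁ l₂ : List (F.V ⊕ d.W),
        List.IsRotated c.support.tail (l₁ ++ l₂) ∧
        (∀ y ∈ l₁, ∃ u, y = Sum.inl u ∧ u ∈ D.supp) ∧
        (∀ y ∈ l₂, ¬ ∃ u, y = Sum.inl u ∧ u ∈ D.supp)) ∧
      (∀ v : Fin (k + 1) → ℕ,
        Set.ncard {D : F.G.ConnectedComponent |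
          labv F D.supp = v ∧ ∃ u ∈ D.supp, Sum.inl u ∈ c.support} ≤ 2) :=
  cycle_structure_general F d hcyc
end

section
/- Isolation Lemma: Let U be a finite set, let F ⊆ 2^U be a nonempty family of subsets of U, and let N > |U| be a positive integer. For each u ∈ U choose a weight w(u) ∈ {1,2,…,N} uniformly and independently at random. Then the probability that w isolates F, i.e., that there is a unique S' ∈ F with w(S') = min_{S ∈ F} w(S) where w(S) = Σ_{u ∈ S} w(u), is at least 1 − |U|/N. -/
/-!
If two sets of minimum weight exist, some element `u` lies in one of them but not in the other. Fix
the weights of all elements other than `u`. Then at most one value of `w u` admits such a pair: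
from a tie, raising `w u` makes every set containing `u` heavier than a minimum set avoiding `u`,
so no set containing `u` is minimum any more. Hence `u` is in this position with probability at most
the reciprocal of the number of values of `w u`, and a union bound over `u` finishes the proof.
-/

section MinWeight

variable {U M : Type*} [AddCommMonoid M] [LinearOrder M]
  {F : Finset (Finset U)} {w w' : U → M} {S T : Finset U} {u : U}

/-- `S` is a set of minimum `w`-weight in the family `F`. -/
def IsMinWeight (F : Finset (Finset U)) (w : U → M) (S : Finset U) : Prop :=
  S ∈ F ∧ ∀ T ∈ F, ∑ u ∈ S, w u ≤ ∑ u ∈ T, w u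

/-- The weight function `w` isolates the family `F`: exactly one set of `F` has minimum weight. -/
def Isolates (F : Finset (Finset U)) (w : U → M) : Prop :=
  ∃! S, IsMinWeight F w S

/-- The element `u` is ambiguous: membership of `u` does not agree on all minimum-weight sets
of `F`. Ambiguous elements are the obstruction to `w` isolating `F`. -/
def IsAmbiguous (F : Finset (Finset U)) (w : U → M) (u : U) : Prop :=
  (∃ S, IsMinWeight F w S ∧ u ∈ S) ∧ ∃ T, IsMinWeight F w T ∧ u ∉ T

theorem exists_isMinWeight (hF : F.Nonempty) (w : U → M) : ∃ S, IsMinWeight F w S :=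
  F.exists_min_image (fun S ↦ ∑ u ∈ S, w u) hF

theorem isolates_of_forall_not_isAmbiguous (hF : F.Nonempty) (h : ∀ u, ¬IsAmbiguous F w u) :
    Isolates F w := by
  have subset_of_isMinWeight {S T : Finset U} (hS : IsMinWeight F w S) (hT : IsMinWeight F w T) :
      S ⊆ T := fun u huS ↦ by_contra fun huT ↦ h u ⟨⟨S, hS, huS⟩, T, hT, huT⟩
  obtain ⟨S, hS⟩ := exists_isMinWeight hF w
  exact ⟨S, hS, fun T hT ↦ (subset_of_isMinWeight hT hS).antisymm (subset_of_isMinWeight hS hT)⟩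

variable [IsOrderedCancelAddMonoid M]

theorem IsMinWeight.apply_le_of_mem_of_notMem (hT : IsMinWeight F w T) (huT : u ∉ T)
    (hS : IsMinWeight F w' S) (huS : u ∈ S) (hww' : Set.EqOn w w' {u}ᶜ) : w' u ≤ w u := by
  by_contra! hlt
  have hle (v : U) : w v ≤ w' v := by
    obtain rfl | hv := eq_or_ne v u
    · exact hlt.le
    · exact (hww' hv).le
  refine (hT.2 S hS.1).not_gt ?_
  calc ∑ v ∈ S, w v
    _ < ∑ v ∈ S, w' v := Finset.sum_lt_sum (fun v _ ↦ hle v) ⟨u, huS, hlt⟩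
    _ ≤ ∑ v ∈ T, w' v := hS.2 T hT.1
    _ = ∑ v ∈ T, w v :=
      Finset.sum_congr rfl fun v hv ↦ (hww' (ne_of_mem_of_not_mem hv huT)).symm

theorem IsAmbiguous.apply_eq_of_eqOn_compl (hw : IsAmbiguous F w u) (hw' : IsAmbiguous F w' u)
    (hww' : Set.EqOn w w' {u}ᶜ) : w u = w' u := by
  obtain ⟨⟨S, hS, huS⟩, T, hT, huT⟩ := hw
  obtain ⟨⟨S', hS', huS'⟩, T', hT', huT'⟩ := hw'
  exact (hT'.apply_le_of_mem_of_notMem huT' hS huS hww'.symm).antisymm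
    (hT.apply_le_of_mem_of_notMem huT hS' huS' hww')

end MinWeight

section RandomWeights

variable {U : Type*} [Fintype U] {α : U → Type*} [∀ u, Fintype (α u)]

theorem dens_le_inv_card_of_injOn_restrict [DecidableEq U] (u : U) {A : Finset (∀ v, α v)}
    (hA : Set.InjOn (fun (x : ∀ v, α v) (v : {v // v ≠ u}) ↦ x v) A) :
    A.dens ≤ (Fintype.card (α u) : ℚ≥0)⁻¹ := by
  have card_pi : Fintype.card (∀ v, α v) =
      Fintype.card (∀ v : {v // v ≠ u}, α v) * Fintype.card (α u) := by
    rw [Fintype.card_congr (Equiv.piSplitAt u α), Fintype.card_prod, mul_comm]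
  have card_le : A.card ≤ Fintype.card (∀ v : {v // v ≠ u}, α v) :=
    Finset.card_le_card_of_injOn _ (fun _ _ ↦ Finset.mem_univ _) hA
  rw [Finset.dens, card_pi, Nat.cast_mul, ← div_div, div_eq_mul_inv _ (Fintype.card (α u) : ℚ≥0)]
  exact mul_le_of_le_one_left' (div_le_one_of_le₀ (mod_cast card_le) zero_le)

variable {M : Type*} [AddCommMonoid M] [LinearOrder M] [IsOrderedCancelAddMonoid M]
  {val : ∀ u, α u → M}

-- A uniform `x : ∀ u, α u` models independent choices, the weight of `u` being `val u (x u)`;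
-- injectivity of `val u` makes that weight uniform on `Fintype.card (α u)` values.
open scoped Classical in
theorem dens_isAmbiguous_le {u : U} (hval : (val u).Injective) (F : Finset (Finset U)) :
    ({x | IsAmbiguous F (fun v ↦ val v (x v)) u} : Finset (∀ v, α v)).dens ≤
      (Fintype.card (α u) : ℚ≥0)⁻¹ := by
  refine dens_le_inv_card_of_injOn_restrict u fun x hx y hy hxy ↦ funext fun v ↦ ?_
  rw [Finset.mem_coe, Finset.mem_filter_univ] at hx hy
  have eq_of_ne {v : U} (hv : v ≠ u) : x v = y v := congrFun hxy ⟨v, hv⟩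
  obtain rfl | hv := eq_or_ne v u
  · exact hval (hx.apply_eq_of_eqOn_compl hy fun v hv ↦ congrArg (val v) (eq_of_ne hv))
  · exact eq_of_ne hv

open scoped Classical in
theorem dens_not_isolates_le (hval : ∀ u, (val u).Injective) {F : Finset (Finset U)}
    (hF : F.Nonempty) :
    ({x | ¬Isolates F fun u ↦ val u (x u)} : Finset (∀ u, α u)).dens ≤
      ∑ u, (Fintype.card (α u) : ℚ≥0)⁻¹ := by
  have not_isolates_subset : ({x | ¬Isolates F fun u ↦ val u (x u)} : Finset (∀ u, α u)) ⊆
      Finset.univ.biUnion fun u ↦ {x | IsAmbiguous F (fun v ↦ val v (x v)) u} := fun x hx ↦ by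
    rw [Finset.mem_filter_univ] at hx
    simpa using mt (fun h ↦ isolates_of_forall_not_isAmbiguous hF (not_exists.1 h)) hx
  calc _ ≤ (Finset.univ.biUnion fun u ↦
          ({x | IsAmbiguous F (fun v ↦ val v (x v)) u} : Finset (∀ u, α u))).dens :=
        Finset.dens_le_dens not_isolates_subset
    _ ≤ ∑ u, ({x | IsAmbiguous F (fun v ↦ val v (x v)) u} : Finset (∀ u, α u)).dens :=
        Finset.dens_biUnion_le
    _ ≤ ∑ u, (Fintype.card (α u) : ℚ≥0)⁻¹ :=
        Finset.sum_le_sum fun u _ ↦ dens_isAmbiguous_le (hval u) F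

open scoped Classical in
theorem isolation_lemma_general [∀ u, Nonempty (α u)] (hval : ∀ u, (val u).Injective)
    {F : Finset (Finset U)} (hF : F.Nonempty) :
    1 - ∑ u, (Fintype.card (α u) : ℚ)⁻¹ ≤
      (Finset.univ.filter fun x : ∀ u, α u ↦ Isolates F fun u ↦ val u (x u)).card /
        Fintype.card (∀ u, α u) := by
  have dens_add : ({x | Isolates F fun u ↦ val u (x u)} : Finset (∀ u, α u)).dens +
      ({x | ¬Isolates F fun u ↦ val u (x u)} : Finset (∀ u, α u)).dens = 1 :=
    (Finset.dens_filter_add_dens_filter_not_eq_dens _).trans Finset.dens_univ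
  have one_le : 1 ≤ ({x | Isolates F fun u ↦ val u (x u)} : Finset (∀ u, α u)).dens +
      ∑ u, (Fintype.card (α u) : ℚ≥0)⁻¹ :=
    dens_add.ge.trans (by gcongr; exact dens_not_isolates_le hval hF)
  rw [← Finset.nnratCast_dens, sub_le_iff_le_add]
  simpa only [NNRat.cast_one, NNRat.cast_add, NNRat.cast_sum, NNRat.cast_inv, NNRat.cast_natCast]
    using NNRat.cast_le (K := ℚ).2 one_le

end RandomWeights

open scoped Classical in
/-- **Isolation Lemma.** Let `U` be a finite set, `F` a nonempty family of
subsets of `U`, and `N > |U|`. Choose weights `w(u) ∈ {1,…,N}` (here encoded as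
`w : U → Fin N` with the weight of `u` being `(w u).val + 1`) uniformly and independently
at random. Then the probability that there is a unique set in `F` of minimum weight is at
least `1 - |U| / N`. -/
theorem isolation_lemma {U : Type} [Fintype U] (F : Finset (Finset U)) (hF : F.Nonempty)
    (N : ℕ) (hN : Fintype.card U < N) :
    1 - (Fintype.card U : ℚ) / N ≤
      ((Finset.univ.filter fun w : U → Fin N =>
          ∃! S, S ∈ F ∧ ∀ T ∈ F,
            (∑ u ∈ S, ((w u : ℕ) + 1)) ≤ ∑ u ∈ T, ((w u : ℕ) + 1)).card : ℚ) /
        (Fintype.card (U → Fin N) : ℚ) := by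
  have : NeZero N := ⟨Nat.ne_zero_of_lt hN⟩
  exact le_of_eq_of_le (by simp [div_eq_mul_inv])
    (isolation_lemma_general (val := fun _ (i : Fin N) ↦ (i : ℕ) + 1)
      (fun _ _ _ h ↦ Fin.ext (Nat.succ_injective h)) hF)
end

section
/- Let (F₁, B₁, φ₁) and (F₂, B₂, φ₂) be boundaried forests with the same pattern, pat(F₁, B₁, φ₁) = pat(F₂, B₂, φ₂). Then F₁ and F₂ are equivalent: for every boundaried forest (H, B, φ) with φ(B) = φ₁(B₁), the glueing of (F₁, B₁, φ₁) with (H, B, φ) is acyclic if and only if the glueing of (F₂, B₂, φ₂) with (H, B, φ) is acyclic. -/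
/-- A boundaried forest: a finite simple forest `F` with a boundary `B` inducing an
independent set, and an injective labeling `φ : B → {0,…,k}` of the boundary. -/
structure BForest (k : ℕ) where
  V : Type
  fin : Finite V
  G : SimpleGraph V
  acyc : G.IsAcyclic
  B : Set V
  indep : ∀ u ∈ B, ∀ v ∈ B, ¬ G.Adj u v
  phi : B → Fin (k + 1)
  inj : Function.Injective phi

/-- The glueing of two boundaried forests with equal boundary label sets: boundary
vertices with equal labels are identified.  Identified boundary vertices are represented
by their labels (labels outside the common image are isolated vertices, which affect
neither acyclicity nor connected components meeting the boundary); since boundaries are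
independent sets, there are no edges between boundary vertices. -/
def glueB {k : ℕ} (F₁ F₂ : BForest k) :
    SimpleGraph (Fin (k + 1) ⊕ ({v : F₁.V // v ∉ F₁.B} ⊕ {v : F₂.V // v ∉ F₂.B})) :=
  SimpleGraph.fromRel fun x y =>
    match x, y with
    | Sum.inl ℓ, Sum.inr (Sum.inl u) => ∃ b : F₁.B, F₁.phi b = ℓ ∧ F₁.G.Adj b u.1
    | Sum.inl ℓ, Sum.inr (Sum.inr u) => ∃ b : F₂.B, F₂.phi b = ℓ ∧ F₂.G.Adj b u.1
    | Sum.inr (Sum.inl u), Sum.inr (Sum.inl v) => F₁.G.Adj u.1 v.1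
    | Sum.inr (Sum.inr u), Sum.inr (Sum.inr v) => F₂.G.Adj u.1 v.1
    | _, _ => False

/-- The pattern of a boundaried forest: the set of label sets `φ(C ∩ B)` over the
connected components `C` of `F` meeting `B`. -/
def patB {k : ℕ} (F : BForest k) : Set (Set (Fin (k + 1))) :=
  {S | S.Nonempty ∧ ∃ C : F.G.ConnectedComponent,
    S = {ℓ | ∃ b : F.B, F.phi b = ℓ ∧ (b : F.V) ∈ C.supp}}

/-!
Gluing `H` onto `F` is adding the edges of `H` to the forest `F`. A cycle created in this way uses
an edge `uv` of `H`, so the glueing is acyclic iff each such `uv` is a bridge of it. Whether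
`uv` is a bridge depends on `F` only through which boundary vertices are connected in `F`: a walk
from `u` to `v` avoiding `uv` alternates between edges of `H` and excursions through components
of `F`. The pattern of `F` records exactly this connectivity.
-/

open SimpleGraph

section SupMap

variable {U V W W₁ W₂ : Type*}

lemma fromRel_le_of_forall_adj {r : V → V → Prop} {G : SimpleGraph V}
    (h : ∀ x y, r x y → G.Adj x y) : fromRel r ≤ G := by
  rintro x y ⟨-, hxy | hyx⟩
  · exact h x y hxy
  · exact (h y x hyx).symm

lemma reachable_map_iff {G : SimpleGraph V} (f : V ↪ W) {u w : W} :
    (G.map f).Reachable u w ↔ u = w ∨ ∃ x y, G.Reachable x y ∧ f x = u ∧ f y = w := by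
  constructor
  · intro h
    rw [reachable_iff_reflTransGen] at h
    induction h with
    | refl => exact .inl rfl
    | tail _ hadj ih =>
      obtain ⟨y, z, hyz, rfl, rfl⟩ := (map_adj f G _ _).mp hadj
      obtain rfl | ⟨x, y', hxy, rfl, hy⟩ := ih
      · exact .inr ⟨y, z, hyz.reachable, rfl, rfl⟩
      · obtain rfl := f.injective hy
        exact .inr ⟨x, z, hxy.trans hyz.reachable, rfl, rfl⟩
  · rintro (rfl | ⟨x, y, hxy, rfl, rfl⟩)
    · exact .refl _
    · exact hxy.map (Embedding.map f G).toHom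

lemma map_deleteEdges (f : V ↪ W) (G : SimpleGraph V) (s : Set (Sym2 V)) :
    (G.deleteEdges s).map f = (G.map f).deleteEdges (Sym2.map f '' s) := by
  rw [← edgeSet_inj]
  simp only [edgeSet_map, edgeSet_deleteEdges]
  exact Set.image_sdiff (Sym2.map.injective f.injective) _ _

lemma reachable_sup_map_iff (A : SimpleGraph W) (f : U ↪ W) (H : SimpleGraph U) {x y : U} :
    (A ⊔ H.map f).Reachable (f x) (f y) ↔
      Relation.ReflTransGen (fun u v ↦ A.Reachable (f u) (f v) ∨ H.Adj u v) x y := by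
  constructor
  · intro h
    -- The endpoint is generalized from `f y` to any `w`, where the walk may still be inside `A`.
    suffices key : ∀ w, (A ⊔ H.map f).Reachable (f x) w →
        ∃ z, Relation.ReflTransGen (fun u v ↦ A.Reachable (f u) (f v) ∨ H.Adj u v) x z ∧
          A.Reachable (f z) w by
      obtain ⟨z, hxz, hzy⟩ := key _ h
      exact hxz.tail (.inl hzy)
    intro w hw
    rw [reachable_iff_reflTransGen] at hw
    induction hw with
    | refl => exact ⟨x, .refl, .refl _⟩
    | tail _ hadj ih =>
      obtain ⟨z, hxz, hz⟩ := ih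
      rw [sup_adj, map_adj] at hadj
      obtain hA | ⟨a, b, hab, rfl, rfl⟩ := hadj
      · exact ⟨z, hxz, hz.trans hA.reachable⟩
      · exact ⟨b, (hxz.tail (.inl hz)).tail (.inr hab), .refl _⟩
  · intro h
    induction h with
    | refl => exact .refl _
    | tail _ hstep ih =>
      refine ih.trans ?_
      obtain hA | hH := hstep
      · exact hA.mono le_sup_left
      · exact .mono le_sup_right (map_adj_apply.mpr hH).reachable

lemma isAcyclic_sup_iff_forall_isBridge {A B : SimpleGraph W} (hA : A.IsAcyclic) :
    (A ⊔ B).IsAcyclic ↔ ∀ ⦃u v⦄, B.Adj u v → (A ⊔ B).IsBridge s(u, v) := by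
  refine ⟨fun h u v huv ↦ isAcyclic_iff_forall_adj_isBridge.mp h (.inr huv), fun h w c hc ↦ ?_⟩
  have edge_mem_A : ∀ e ∈ c.edges, e ∈ A.edgeSet := by
    intro e he
    have he_sup : e ∈ (A ⊔ B).edgeSet := c.edges_subset_edgeSet he
    induction e with | h u v =>
    refine he_sup.resolve_right fun huv ↦ ?_
    exact (h huv).notMem_edges_of_isCycle hc he
  exact hA _ (hc.transfer edge_mem_A)

lemma isBridge_sup_map_iff {A : SimpleGraph W} {f : U ↪ W} {H : SimpleGraph U} {x y : U}
    (hA : ¬A.Adj (f x) (f y)) :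
    (A ⊔ H.map f).IsBridge s(f x, f y) ↔
      ¬Relation.ReflTransGen
        (fun u v ↦ A.Reachable (f u) (f v) ∨ (H.deleteEdges {s(x, y)}).Adj u v) x y := by
  have deleteEdges_eq : (A ⊔ H.map f).deleteEdges {s(f x, f y)} =
      A ⊔ (H.deleteEdges {s(x, y)}).map f := by
    rw [deleteEdges_sup, map_deleteEdges, Set.image_singleton, Sym2.map_mk,
      deleteEdges_eq_self.mpr (Set.disjoint_singleton_right.mpr hA)]
  rw [isBridge_iff, deleteEdges_eq, reachable_sup_map_iff]

theorem isAcyclic_sup_map_iff {A : SimpleGraph W} {f : U ↪ W} {H : SimpleGraph U}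
    (acyclic : A.IsAcyclic) (not_adj : ∀ ⦃x y⦄, H.Adj x y → ¬A.Adj (f x) (f y)) :
    (A ⊔ H.map f).IsAcyclic ↔ ∀ ⦃x y⦄, H.Adj x y →
      ¬Relation.ReflTransGen
        (fun u v ↦ A.Reachable (f u) (f v) ∨ (H.deleteEdges {s(x, y)}).Adj u v) x y := by
  rw [isAcyclic_sup_iff_forall_isBridge acyclic]
  constructor
  · intro h x y hxy
    exact (isBridge_sup_map_iff (not_adj hxy)).mp (h (map_adj_apply.mpr hxy))
  · intro h u v huv
    obtain ⟨x, y, hxy, rfl, rfl⟩ := (map_adj f H u v).mp huv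
    exact (isBridge_sup_map_iff (not_adj hxy)).mpr (h hxy)

theorem isAcyclic_sup_map_congr {A₁ : SimpleGraph W₁} {A₂ : SimpleGraph W₂} {f₁ : U ↪ W₁}
    {f₂ : U ↪ W₂} {H : SimpleGraph U} (acyclic₁ : A₁.IsAcyclic) (acyclic₂ : A₂.IsAcyclic)
    (reachable_iff : ∀ x y, A₁.Reachable (f₁ x) (f₁ y) ↔ A₂.Reachable (f₂ x) (f₂ y))
    (not_adj₁ : ∀ ⦃x y⦄, H.Adj x y → ¬A₁.Adj (f₁ x) (f₁ y))
    (not_adj₂ : ∀ ⦃x y⦄, H.Adj x y → ¬A₂.Adj (f₂ x) (f₂ y)) :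
    (A₁ ⊔ H.map f₁).IsAcyclic ↔ (A₂ ⊔ H.map f₂).IsAcyclic := by
  simp only [isAcyclic_sup_map_iff acyclic₁ not_adj₁, isAcyclic_sup_map_iff acyclic₂ not_adj₂,
    reachable_iff]

-- `G` and `G.map f` arise by adding the edges of `G` to the edgeless graphs on `V` and on `W`.
lemma isAcyclic_map {G : SimpleGraph V} (hG : G.IsAcyclic) (f : V ↪ W) : (G.map f).IsAcyclic := by
  have map_iff : (⊥ ⊔ G.map (Function.Embedding.refl V)).IsAcyclic ↔ (⊥ ⊔ G.map f).IsAcyclic :=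
    isAcyclic_sup_map_congr isAcyclic_bot isAcyclic_bot (by simp [reachable_bot]) (by simp)
      (by simp)
  rw [bot_sup_eq, bot_sup_eq, Function.Embedding.coe_refl, map_id] at map_iff
  exact map_iff.mp hG

end SupMap

namespace BForest

variable {k : ℕ}

open Classical in
/-- The vertices of `F` with each boundary vertex replaced by its label, as in the vertex type
of `glueB`. -/
noncomputable def labelBoundary (F : BForest k) : F.V ↪ Fin (k + 1) ⊕ {v : F.V // v ∉ F.B} :=
  (Equiv.sumCompl (· ∈ F.B)).symm.toEmbedding.trans (.sumMap ⟨F.phi, F.inj⟩ (.refl _))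

/-- The inclusion of the vertices of `F` into those of the glueing `glueB F H`. -/
noncomputable def glueLeft (F H : BForest k) :
    F.V ↪ Fin (k + 1) ⊕ ({v : F.V // v ∉ F.B} ⊕ {v : H.V // v ∉ H.B}) :=
  F.labelBoundary.trans (.sumMap (.refl _) .inl)

/-- The inclusion of the vertices of `H` into those of the glueing `glueB F H`. -/
noncomputable def glueRight (F H : BForest k) :
    H.V ↪ Fin (k + 1) ⊕ ({v : F.V // v ∉ F.B} ⊕ {v : H.V // v ∉ H.B}) :=
  H.labelBoundary.trans (.sumMap (.refl _) .inr)

variable (F H : BForest k)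

@[simp]
lemma glueLeft_boundary (b : F.B) : glueLeft F H b = .inl (F.phi b) := by
  simp [glueLeft, labelBoundary]

@[simp]
lemma glueLeft_interior (v : {v // v ∉ F.B}) : glueLeft F H v = .inr (.inl v) := by
  simp [glueLeft, labelBoundary]

@[simp]
lemma glueRight_boundary (b : H.B) : glueRight F H b = .inl (H.phi b) := by
  simp [glueRight, labelBoundary]

@[simp]
lemma glueRight_interior (v : {v // v ∉ H.B}) : glueRight F H v = .inr (.inr v) := by
  simp [glueRight, labelBoundary]

lemma exists_boundary_or_exists_interior (v : F.V) :
    (∃ b : F.B, b = v) ∨ ∃ u : {v // v ∉ F.B}, u = v := by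
  simp [em]

lemma glueLeft_eq_glueRight_iff {v : F.V} {x : H.V} :
    glueLeft F H v = glueRight F H x ↔
      ∃ (b : F.B) (c : H.B), F.phi b = H.phi c ∧ b = v ∧ c = x := by
  constructor
  · intro h
    obtain ⟨b, rfl⟩ | ⟨v, rfl⟩ := F.exists_boundary_or_exists_interior v <;>
      obtain ⟨c, rfl⟩ | ⟨x, rfl⟩ := H.exists_boundary_or_exists_interior x <;>
      simp only [glueLeft_boundary, glueLeft_interior, glueRight_boundary, glueRight_interior,
        reduceCtorEq, Sum.inl.injEq, Sum.inr.injEq] at h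
    exact ⟨b, c, h, rfl, rfl⟩
  · rintro ⟨b, c, h, rfl, rfl⟩
    simp [h]

lemma map_glueLeft_le_glueB : F.G.map (glueLeft F H) ≤ glueB F H := by
  rw [map_le_iff_le_comap]
  intro v w hvw
  refine ⟨(glueLeft F H).injective.ne hvw.ne, ?_⟩
  obtain ⟨b, rfl⟩ | ⟨v, rfl⟩ := F.exists_boundary_or_exists_interior v <;>
    obtain ⟨c, rfl⟩ | ⟨w, rfl⟩ := F.exists_boundary_or_exists_interior w <;>
    simp only [glueLeft_boundary, glueLeft_interior]
  · exact absurd hvw (F.indep b b.2 c c.2)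
  · exact .inl ⟨b, rfl, hvw⟩
  · exact .inr ⟨c, rfl, hvw.symm⟩
  · exact .inl hvw

lemma map_glueRight_le_glueB : H.G.map (glueRight F H) ≤ glueB F H := by
  rw [map_le_iff_le_comap]
  intro v w hvw
  refine ⟨(glueRight F H).injective.ne hvw.ne, ?_⟩
  obtain ⟨b, rfl⟩ | ⟨v, rfl⟩ := H.exists_boundary_or_exists_interior v <;>
    obtain ⟨c, rfl⟩ | ⟨w, rfl⟩ := H.exists_boundary_or_exists_interior w <;>
    simp only [glueRight_boundary, glueRight_interior]
  · exact absurd hvw (H.indep b b.2 c c.2)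
  · exact .inl ⟨b, rfl, hvw⟩
  · exact .inr ⟨c, rfl, hvw.symm⟩
  · exact .inl hvw

lemma glueB_le_sup : glueB F H ≤ F.G.map (glueLeft F H) ⊔ H.G.map (glueRight F H) := by
  have left_adj {v w : F.V} (h : F.G.Adj v w) :
      (F.G.map (glueLeft F H) ⊔ H.G.map (glueRight F H)).Adj (glueLeft F H v) (glueLeft F H w) :=
    .inl (map_adj_apply.mpr h)
  have right_adj {v w : H.V} (h : H.G.Adj v w) :
      (F.G.map (glueLeft F H) ⊔ H.G.map (glueRight F H)).Adj
        (glueRight F H v) (glueRight F H w) :=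
    .inr (map_adj_apply.mpr h)
  refine fromRel_le_of_forall_adj fun x y hxy ↦ ?_
  rcases x with l | v | v <;> rcases y with m | w | w <;> try exact hxy.elim
  · obtain ⟨b, rfl, hb⟩ := hxy
    simpa only [glueLeft_boundary, glueLeft_interior] using left_adj hb
  · obtain ⟨b, rfl, hb⟩ := hxy
    simpa only [glueRight_boundary, glueRight_interior] using right_adj hb
  · simpa only [glueLeft_interior] using left_adj hxy
  · simpa only [glueRight_interior] using right_adj hxy

lemma glueB_eq_sup : glueB F H = F.G.map (glueLeft F H) ⊔ H.G.map (glueRight F H) :=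
  le_antisymm (glueB_le_sup F H) <|
    sup_le (map_glueLeft_le_glueB F H) (map_glueRight_le_glueB F H)

lemma exists_mem_patB_iff {l m : Fin (k + 1)} :
    (∃ S ∈ patB F, l ∈ S ∧ m ∈ S) ↔
      ∃ b c : F.B, F.G.Reachable b c ∧ F.phi b = l ∧ F.phi c = m := by
  constructor
  · rintro ⟨_, ⟨_, C, rfl⟩, ⟨b, rfl, hb⟩, ⟨c, rfl, hc⟩⟩
    exact ⟨b, c, C.reachable_of_mem_supp hb hc, rfl, rfl⟩
  · rintro ⟨b, c, hbc, rfl, rfl⟩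
    let C := F.G.connectedComponentMk b
    have hb : (b : F.V) ∈ C.supp := rfl
    have hc : (c : F.V) ∈ C.supp := ConnectedComponent.sound hbc.symm
    exact ⟨{l | ∃ b' : F.B, F.phi b' = l ∧ (b' : F.V) ∈ C.supp},
      ⟨⟨F.phi b, b, rfl, hb⟩, C, rfl⟩, ⟨b, rfl, hb⟩, ⟨c, rfl, hc⟩⟩

lemma reachable_map_glueLeft_iff {x y : H.V} :
    (F.G.map (glueLeft F H)).Reachable (glueRight F H x) (glueRight F H y) ↔
      x = y ∨ ∃ c d : H.B, (∃ S ∈ patB F, H.phi c ∈ S ∧ H.phi d ∈ S) ∧ c = x ∧ d = y := by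
  simp only [reachable_map_iff, (glueRight F H).injective.eq_iff, glueLeft_eq_glueRight_iff,
    exists_mem_patB_iff]
  refine or_congr_right ⟨?_, ?_⟩
  · rintro ⟨_, _, hbb', ⟨b, c, hbc, rfl, rfl⟩, b', d, hbd, rfl, rfl⟩
    exact ⟨c, d, ⟨b, b', hbb', hbc, hbd⟩, rfl, rfl⟩
  · rintro ⟨c, d, ⟨b, b', hbb', hbc, hbd⟩, rfl, rfl⟩
    exact ⟨b, b', hbb', ⟨b, c, hbc, rfl, rfl⟩, b', d, hbd, rfl, rfl⟩

lemma not_adj_map_glueLeft ⦃x y : H.V⦄ (hxy : H.G.Adj x y) :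
    ¬(F.G.map (glueLeft F H)).Adj (glueRight F H x) (glueRight F H y) := by
  rw [map_adj]
  rintro ⟨v, w, -, hv, hw⟩
  obtain ⟨-, c, -, -, rfl⟩ := (glueLeft_eq_glueRight_iff F H).mp hv
  obtain ⟨-, d, -, -, rfl⟩ := (glueLeft_eq_glueRight_iff F H).mp hw
  exact H.indep c c.2 d d.2 hxy

end BForest

theorem equiv_of_same_pattern_general {k : ℕ} {F₁ F₂ : BForest k} (hpat : patB F₁ = patB F₂)
    (H : BForest k) : (glueB F₁ H).IsAcyclic ↔ (glueB F₂ H).IsAcyclic := by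
  rw [BForest.glueB_eq_sup, BForest.glueB_eq_sup]
  exact isAcyclic_sup_map_congr (isAcyclic_map F₁.acyc _) (isAcyclic_map F₂.acyc _)
    (fun x y ↦ by simp only [BForest.reachable_map_glueLeft_iff, hpat])
    (BForest.not_adj_map_glueLeft F₁ H) (BForest.not_adj_map_glueLeft F₂ H)

/-- Boundaried forests with the same pattern are equivalent: for every
boundaried forest `H` whose boundary has the same label set, gluing with `F₁` gives an
acyclic graph iff gluing with `F₂` does. -/
theorem equiv_of_same_pattern {k : ℕ} (F₁ F₂ : BForest k)
    (hpat : patB F₁ = patB F₂) :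
    ∀ H : BForest k, Set.range H.phi = Set.range F₁.phi →
      ((glueB F₁ H).IsAcyclic ↔ (glueB F₂ H).IsAcyclic) := by
  exact fun H _ ↦ equiv_of_same_pattern_general hpat H
end

section
/- Let p = {S₁, …, S_n} be a treewidth pattern with n ≥ 3 blocks, let X = S₁, Y = S₂, Z = S₃ be three distinct blocks of p, and let R = p ∖ {X, Y, Z}. Define the treewidth patterns p₁ = R ∪ {X ∪ Y, Z}, p₂ = R ∪ {X ∪ Z, Y}, p₃ = R ∪ {Y ∪ Z, X}, and p₄ = R ∪ {X ∪ Y ∪ Z}. Then for every treewidth pattern q, the number of indices i ∈ {1,2,3,4} with pᵢ ◁ q is even; in particular, {p₂, p₃, p₄} represents {p₁}. -/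
/-- A (candidate) treewidth pattern: a finite collection of blocks of labels in
`{0,…,k}`. -/
abbrev TWP (k : ℕ) := Finset (Finset (Fin (k + 1)))

/-- A treewidth pattern: a partition of a subset `L_p ⊆ {0,…,k}` containing `0`. -/
def IsTWPat {k : ℕ} (p : TWP k) : Prop :=
  (∀ S ∈ p, S.Nonempty) ∧ (∀ S ∈ p, ∀ T ∈ p, S ≠ T → Disjoint S T) ∧
    ∃ S ∈ p, (0 : Fin (k + 1)) ∈ S

/-- The label set `L_p` of a pattern. -/
def labels {k : ℕ} (p : TWP k) : Finset (Fin (k + 1)) := p.sup id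

/-- The glueing of the canonical forests of two treewidth patterns `p` and `q`: the
(identified) boundary vertices are represented by their labels, and each block gets a
star center adjacent to the labels it contains.  (Labels outside `L_p` are isolated and
affect neither acyclicity nor components meeting the boundary.) -/
def glueTP {k : ℕ} (p q : TWP k) :
    SimpleGraph (Fin (k + 1) ⊕ ({S // S ∈ p} ⊕ {S // S ∈ q})) :=
  SimpleGraph.fromRel fun x y =>
    match x, y with
    | Sum.inl ℓ, Sum.inr (Sum.inl S) => ℓ ∈ S.1
    | Sum.inl ℓ, Sum.inr (Sum.inr S) => ℓ ∈ S.1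
    | _, _ => False

/-- Compatibility `p ◁ q` of treewidth patterns: the label sets agree and the glueing of
the canonical forests is acyclic. -/
def Compat {k : ℕ} (p q : TWP k) : Prop :=
  labels p = labels q ∧ (glueTP p q).IsAcyclic

open scoped Classical in
/-- The join `p ⋈ q` of two treewidth patterns: `⊥` (i.e. `none`) if the label sets differ
or the glueing of the canonical forests contains a cycle; otherwise the pattern whose
blocks are the label sets of the connected components of the glued forest. -/
noncomputable def joinTP {k : ℕ} (p q : TWP k) : Option (TWP k) :=
  if labels p = labels q ∧ (glueTP p q).IsAcyclic then
    some ((labels p).image fun ℓ =>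
      (labels p).filter fun ℓ' => (glueTP p q).Reachable (Sum.inl ℓ) (Sum.inl ℓ'))
  else none

open scoped Classical in
/-- A family `R` of treewidth patterns represents a family `S` if for every treewidth
pattern `r`, the numbers of patterns of `R` and of `S` compatible with `r` agree
modulo 2. -/
def Represents {k : ℕ} (R S : Finset (TWP k)) : Prop :=
  ∀ r : TWP k, IsTWPat r →
    (R.filter fun pp => Compat pp r).card % 2 = (S.filter fun pp => Compat pp r).card % 2

/-!
Each `pᵢ` arises from `p` by merging a set `A` of blocks, and on glueings this collapses the centers
of the blocks in `A` to a single vertex. As the blocks are disjoint, no edges are identified, so the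
collapsed graph is a forest iff the original one is and the collapsed vertices lie in pairwise
distinct components. Hence no `pᵢ` is compatible with `q` unless `p` is, and in that case everything
depends on which of `X, Y, Z` share a component of the glueing of `p` and `q`: if none do, all four
`pᵢ` are compatible with `q`, if exactly two do, then exactly two are, and if all three do, none is.
-/

section Collapse

open SimpleGraph

variable {V W : Type*} {G : SimpleGraph V} {f : V → W} {A : Set V}

/-- `f` is a quotient map that collapses `A` to a single vertex: two distinct vertices have the same
image exactly if both lie in `A`. -/
def IsCollapse (f : V → W) (A : Set V) : Prop :=
  ∀ x y, f x = f y ↔ x = y ∨ x ∈ A ∧ y ∈ A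

theorem reachable_map_of_reachable {x y : V} (h : G.Reachable x y) :
    (G.map f).Reachable (f x) (f y) := by
  rw [reachable_iff_reflTransGen] at h
  induction h with
  | refl => rfl
  | @tail u v _ huv ih =>
    by_cases hne : f u = f v
    · rwa [← hne]
    · exact ih.trans (map_adj_apply' huv hne).reachable

theorem IsCollapse.reachable_map_iff (hf : IsCollapse f A) {x y : V} :
    (G.map f).Reachable (f x) (f y) ↔
      G.Reachable x y ∨ (∃ a ∈ A, G.Reachable x a) ∧ ∃ b ∈ A, G.Reachable b y := by
  have of_eq {u v : V} (huv : f u = f v)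
      (hu : G.Reachable x u ∨ (∃ a ∈ A, G.Reachable x a) ∧ ∃ b ∈ A, G.Reachable b u) :
      G.Reachable x v ∨ (∃ a ∈ A, G.Reachable x a) ∧ ∃ b ∈ A, G.Reachable b v := by
    obtain rfl | ⟨huA, hvA⟩ := (hf u v).1 huv
    · exact hu
    · exact .inr ⟨hu.elim (fun h ↦ ⟨u, huA, h⟩) And.left, v, hvA, .rfl⟩
  constructor
  · intro h
    rw [reachable_iff_reflTransGen] at h
    generalize hw : f y = w at h
    induction h generalizing y with
    | refl => exact of_eq hw.symm (.inl .rfl)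
    | tail _ hadj ih =>
      obtain ⟨-, u, v, huv, rfl, rfl⟩ := hadj
      refine of_eq hw.symm ((ih rfl).imp (·.trans huv.reachable) ?_)
      exact And.imp_right fun ⟨b, hb, hbu⟩ ↦ ⟨b, hb, hbu.trans huv.reachable⟩
  · rintro (h | ⟨⟨a, ha, hxa⟩, b, hb, hby⟩)
    · exact reachable_map_of_reachable h
    · have hab : f a = f b := (hf a b).2 (.inr ⟨ha, hb⟩)
      have hxb : (G.map f).Reachable (f x) (f b) := hab ▸ reachable_map_of_reachable hxa
      exact hxb.trans (reachable_map_of_reachable hby)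

theorem deleteEdges_map_of_injOn (hinj : Set.InjOn (Sym2.map f) G.edgeSet) {e : Sym2 V}
    (he : e ∈ G.edgeSet) :
    (G.map f).deleteEdges {e.map f} = (G.deleteEdges {e}).map f := by
  ext u v
  simp only [deleteEdges_adj, map_adj', Set.mem_singleton_iff]
  constructor
  · rintro ⟨⟨hne, x, y, hxy, rfl, rfl⟩, hxye⟩
    exact ⟨hne, x, y, ⟨hxy, fun h ↦ hxye (h ▸ rfl)⟩, rfl, rfl⟩
  · rintro ⟨hne, x, y, ⟨hxy, hxye⟩, rfl, rfl⟩
    exact ⟨⟨hne, x, y, hxy, rfl, rfl⟩, fun h ↦ hxye (hinj hxy he h)⟩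

theorem IsCollapse.injOn_edgeSet (hf : IsCollapse f A) (hindep : G.IsIndepSet A)
    (hnbr : A.PairwiseDisjoint G.neighborSet) : Set.InjOn (Sym2.map f) G.edgeSet := by
  have eq_of_eq {x y u v : V} (hxy : G.Adj x y) (huv : G.Adj u v) (hxu : f x = f u)
      (hyv : f y = f v) : x = u ∧ y = v := by
    have eq_of_adj {a b c : V} (ha : a ∈ A) (hb : b ∈ A) (hac : G.Adj a c) (hbc : G.Adj b c) :
        a = b := hnbr.elim_set ha hb c hac hbc
    have not_adj {a b : V} (ha : a ∈ A) (hb : b ∈ A) (hab : G.Adj a b) : False :=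
      hindep ha hb hab.ne hab
    obtain rfl | ⟨hx, hu⟩ := (hf x u).1 hxu <;> obtain rfl | ⟨hy, hv⟩ := (hf y v).1 hyv
    · exact ⟨rfl, rfl⟩
    · exact ⟨rfl, eq_of_adj hy hv hxy.symm huv.symm⟩
    · exact ⟨eq_of_adj hx hu hxy huv, rfl⟩
    · exact (not_adj hx hy hxy).elim
  rintro ⟨x, y⟩ hxy ⟨u, v⟩ huv h
  obtain ⟨hxu, hyv⟩ | ⟨hxv, hyu⟩ := Sym2.eq_iff.1 h
  · exact Sym2.eq_iff.2 (.inl (eq_of_eq hxy huv hxu hyv))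
  · exact Sym2.eq_iff.2 (.inr (eq_of_eq hxy (G.adj_symm huv) hxv hyu))

theorem exists_adj_reachable_deleteEdges {a b : V} (hne : a ≠ b) (h : G.Reachable a b) :
    ∃ x, G.Adj a x ∧ (G.deleteEdges {s(a, x)}).Reachable x b := by
  obtain ⟨w, hw⟩ := h.exists_isPath
  cases w with
  | nil => exact absurd rfl hne
  | @cons _ x _ hax w =>
    have ha : a ∉ w.support := ((Walk.cons_isPath_iff _ _).1 hw).2
    exact ⟨x, hax, reachable_deleteEdges_iff_exists_walk.2
      ⟨w, fun h ↦ ha (w.fst_mem_support_of_mem_edges h)⟩⟩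

theorem IsCollapse.isBridge_map_iff (hf : IsCollapse f A) (hindep : G.IsIndepSet A)
    (hnbr : A.PairwiseDisjoint G.neighborSet) {x y : V} (hxy : G.Adj x y) :
    (G.map f).IsBridge s(f x, f y) ↔ G.IsBridge s(x, y) ∧
      ¬((∃ a ∈ A, (G.deleteEdges {s(x, y)}).Reachable x a) ∧
        ∃ b ∈ A, (G.deleteEdges {s(x, y)}).Reachable b y) := by
  rw [isBridge_iff, isBridge_iff, ← not_or, not_iff_not, ← hf.reachable_map_iff,
    ← deleteEdges_map_of_injOn (hf.injOn_edgeSet hindep hnbr) hxy, Sym2.map_mk]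

theorem IsCollapse.isAcyclic_map_iff_forall_isBridge (hf : IsCollapse f A)
    (hindep : G.IsIndepSet A) :
    (G.map f).IsAcyclic ↔ ∀ x y, G.Adj x y → (G.map f).IsBridge s(f x, f y) := by
  rw [isAcyclic_iff_forall_adj_isBridge]
  constructor
  · intro h x y hxy
    refine h (map_adj_apply' hxy fun hfxy ↦ ?_)
    obtain hxy' | ⟨hx, hy⟩ := (hf x y).1 hfxy
    · exact hxy.ne hxy'
    · exact hindep hx hy hxy.ne hxy
  · rintro h _ _ ⟨-, x, y, hxy, rfl, rfl⟩
    exact h x y hxy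

theorem IsCollapse.isAcyclic_map_iff (hf : IsCollapse f A) (hindep : G.IsIndepSet A)
    (hnbr : A.PairwiseDisjoint G.neighborSet) :
    (G.map f).IsAcyclic ↔ G.IsAcyclic ∧ A.Pairwise fun a b ↦ ¬G.Reachable a b := by
  rw [hf.isAcyclic_map_iff_forall_isBridge hindep]
  constructor
  · intro h
    have hbridge {x y : V} (hxy : G.Adj x y) := (hf.isBridge_map_iff hindep hnbr hxy).1 (h x y hxy)
    refine ⟨isAcyclic_iff_forall_adj_isBridge.2 fun x y hxy ↦ (hbridge hxy).1, ?_⟩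
    -- A path from `a` to `b` becomes a closed walk; its first edge is then not a bridge.
    intro a ha b hb hne hab
    obtain ⟨x, hax, hxb⟩ := exists_adj_reachable_deleteEdges hne hab
    exact (hbridge hax).2 ⟨⟨a, ha, .rfl⟩, b, hb, hxb.symm⟩
  · rintro ⟨hG, hA⟩ x y hxy
    have hbridge : G.IsBridge s(x, y) := isAcyclic_iff_forall_adj_isBridge.1 hG hxy
    refine (hf.isBridge_map_iff hindep hnbr hxy).2 ⟨hbridge, ?_⟩
    rintro ⟨⟨a, ha, hxa⟩, b, hb, hby⟩
    have hab : G.Reachable a b :=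
      (hxa.mono (deleteEdges_le _)).symm.trans
        (hxy.reachable.trans (hby.mono (deleteEdges_le _)).symm)
    obtain rfl : a = b := by_contra fun hne ↦ hA ha hb hne hab
    exact isBridge_iff.1 hbridge (hxa.trans hby)

end Collapse

section MergeBlocks

open SimpleGraph

variable {k : ℕ} {p q A : TWP k}

/-- The pattern obtained from `p` by replacing the blocks in `A` by their union. -/
def mergeBlocks (p A : TWP k) : TWP k := insert (A.sup id) (p \ A)

theorem labels_mergeBlocks (hA : A ⊆ p) : labels (mergeBlocks p A) = labels p := by
  rw [labels, mergeBlocks, Finset.sup_insert, id, ← Finset.sup_union,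
    Finset.union_sdiff_of_subset hA, labels]

theorem sup_notMem_sdiff_of_nontrivial (hp : (p : Set (Finset (Fin (k + 1)))).PairwiseDisjoint id)
    (hA : A ⊆ p) (hA' : A.Nontrivial) : A.sup id ∉ p \ A := by
  intro hU
  obtain ⟨hUp, hUA⟩ := Finset.mem_sdiff.1 hU
  have eq_empty {S} (hS : S ∈ A) : S = ∅ := by
    have hdisj : Disjoint S (A.sup id) := hp (hA hS) hUp (ne_of_mem_of_not_mem hS hUA)
    exact Finset.disjoint_self_iff_empty S |>.1 (hdisj.mono_right (Finset.le_sup (f := id) hS))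
  obtain ⟨S, hS, T, hT, hne⟩ := hA'
  exact hne ((eq_empty hS).trans (eq_empty hT).symm)

/-- The block of `mergeBlocks p A` containing a given block of `p`. -/
def mergeMap (p A : TWP k) (S : {S // S ∈ p}) : {S // S ∈ mergeBlocks p A} :=
  if h : S.1 ∈ A then ⟨A.sup id, Finset.mem_insert_self _ _⟩
  else ⟨S, Finset.mem_insert_of_mem (Finset.mem_sdiff.2 ⟨S.2, h⟩)⟩

theorem coe_mergeMap_of_mem {S : {S // S ∈ p}} (hS : S.1 ∈ A) :
    (mergeMap p A S).1 = A.sup id := by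
  rw [mergeMap, dif_pos hS]

theorem coe_mergeMap_of_notMem {S : {S // S ∈ p}} (hS : S.1 ∉ A) :
    (mergeMap p A S).1 = S.1 := by
  rw [mergeMap, dif_neg hS]

theorem mergeMap_eq_iff (hU : A.sup id ∉ p \ A) {S T : {S // S ∈ p}} :
    mergeMap p A S = mergeMap p A T ↔ S = T ∨ S.1 ∈ A ∧ T.1 ∈ A := by
  have ne_sup {R : {S // S ∈ p}} (hR : R.1 ∉ A) : R.1 ≠ A.sup id :=
    fun h ↦ hU (h ▸ Finset.mem_sdiff.2 ⟨R.2, hR⟩)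
  by_cases hS : S.1 ∈ A <;> by_cases hT : T.1 ∈ A <;>
    simp only [Subtype.ext_iff, coe_mergeMap_of_mem, coe_mergeMap_of_notMem, hS, hT,
      not_false_eq_true, and_self, and_true, and_false, or_true, or_false]
  · exact iff_of_false (ne_sup hT).symm (ne_of_mem_of_not_mem hS hT)
  · exact iff_of_false (ne_sup hS) (ne_of_mem_of_not_mem hT hS).symm

theorem mem_block_mergeBlocks_iff (hA : A ⊆ p) {ℓ : Fin (k + 1)}
    {T : {S // S ∈ mergeBlocks p A}} :
    ℓ ∈ T.1 ↔ ∃ S : {S // S ∈ p}, ℓ ∈ S.1 ∧ mergeMap p A S = T := by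
  constructor
  · obtain ⟨T, hT⟩ := T
    intro hℓ
    obtain rfl | hTp := Finset.mem_insert.1 hT
    · obtain ⟨S, hS, hℓS⟩ := Finset.mem_sup.1 hℓ
      exact ⟨⟨S, hA hS⟩, hℓS, Subtype.ext (coe_mergeMap_of_mem hS)⟩
    · obtain ⟨hTp, hTA⟩ := Finset.mem_sdiff.1 hTp
      exact ⟨⟨T, hTp⟩, hℓ, Subtype.ext (coe_mergeMap_of_notMem hTA)⟩
  · rintro ⟨S, hℓ, rfl⟩
    by_cases hS : S.1 ∈ A
    · exact coe_mergeMap_of_mem hS ▸ Finset.mem_sup.2 ⟨S, hS, hℓ⟩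
    · rwa [coe_mergeMap_of_notMem hS]

/-- The map between the vertex sets of glueings with `q` induced by merging the blocks in `A`. -/
def glueMap (p q A : TWP k) : Fin (k + 1) ⊕ ({S // S ∈ p} ⊕ {S // S ∈ q}) →
    Fin (k + 1) ⊕ ({S // S ∈ mergeBlocks p A} ⊕ {S // S ∈ q}) :=
  Sum.map id (Sum.map (mergeMap p A) id)

theorem glueTP_mergeBlocks (hA : A ⊆ p) :
    glueTP (mergeBlocks p A) q = (glueTP p q).map (glueMap p q A) := by
  ext u v
  rcases u with ℓ | S | S <;> rcases v with m | T | T <;>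
    simp [glueTP, glueMap, map_adj', mem_block_mergeBlocks_iff hA]

/-- The star centers of the blocks of `p` in `A`, as vertices of the glueing of `p` and `q`. -/
def centers (p q A : TWP k) : Set (Fin (k + 1) ⊕ ({S // S ∈ p} ⊕ {S // S ∈ q})) :=
  {v | ∃ S : {S // S ∈ p}, S.1 ∈ A ∧ Sum.inr (Sum.inl S) = v}

theorem isCollapse_glueMap (hU : A.sup id ∉ p \ A) :
    IsCollapse (glueMap p q A) (centers p q A) := by
  rintro (ℓ | S | S) (m | T | T) <;> simp [glueMap, centers, mergeMap_eq_iff hU]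

theorem isIndepSet_centers : (glueTP p q).IsIndepSet (centers p q A) := by
  rintro _ ⟨S, -, rfl⟩ _ ⟨T, -, rfl⟩ -
  simp [glueTP]

theorem pairwiseDisjoint_neighborSet_centers
    (hp : (p : Set (Finset (Fin (k + 1)))).PairwiseDisjoint id) :
    (centers p q A).PairwiseDisjoint (glueTP p q).neighborSet := by
  rintro _ ⟨S, -, rfl⟩ _ ⟨T, -, rfl⟩ hne
  refine Set.disjoint_left.2 ?_
  rintro (ℓ | R | R) hS hT
  · have hℓS : ℓ ∈ S.1 := by simpa [glueTP] using hS
    have hℓT : ℓ ∈ T.1 := by simpa [glueTP] using hT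
    have hST : S = T := Subtype.ext (hp.elim_finset S.2 T.2 ℓ hℓS hℓT)
    exact hne (hST ▸ rfl)
  all_goals simp [glueTP] at hS

/-- The centers of the blocks `S` and `T` of `p` lie in the same component of the glueing of `p` and
`q`. -/
def BlocksReachable (p q : TWP k) (S T : Finset (Fin (k + 1))) : Prop :=
  ∃ (hS : S ∈ p) (hT : T ∈ p),
    (glueTP p q).Reachable (Sum.inr (Sum.inl ⟨S, hS⟩)) (Sum.inr (Sum.inl ⟨T, hT⟩))

theorem blocksReachable_comm {S T : Finset (Fin (k + 1))} :
    BlocksReachable p q S T ↔ BlocksReachable p q T S :=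
  ⟨fun ⟨hS, hT, h⟩ ↦ ⟨hT, hS, h.symm⟩, fun ⟨hT, hS, h⟩ ↦ ⟨hS, hT, h.symm⟩⟩

theorem BlocksReachable.trans {S T U : Finset (Fin (k + 1))} :
    BlocksReachable p q S T → BlocksReachable p q T U → BlocksReachable p q S U :=
  fun ⟨hS, _, hST⟩ ⟨_, hU, hTU⟩ ↦ ⟨hS, hU, hST.trans hTU⟩

theorem pairwise_not_reachable_centers_iff :
    ((centers p q A).Pairwise fun u v ↦ ¬(glueTP p q).Reachable u v) ↔
      (A : Set (Finset (Fin (k + 1)))).Pairwise fun S T ↦ ¬BlocksReachable p q S T := by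
  constructor
  · rintro h S hS T hT hne ⟨hSp, hTp, hST⟩
    exact h ⟨⟨S, hSp⟩, hS, rfl⟩ ⟨⟨T, hTp⟩, hT, rfl⟩ (by simpa using hne) hST
  · rintro h _ ⟨S, hS, rfl⟩ _ ⟨T, hT, rfl⟩ hne hST
    exact h hS hT (fun h ↦ hne (Subtype.ext h ▸ rfl)) ⟨S.2, T.2, hST⟩

theorem compat_mergeBlocks_iff (hp : (p : Set (Finset (Fin (k + 1)))).PairwiseDisjoint id)
    (hA : A ⊆ p) (hA' : A.Nontrivial) :
    Compat (mergeBlocks p A) q ↔ Compat p q ∧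
      (A : Set (Finset (Fin (k + 1)))).Pairwise fun S T ↦ ¬BlocksReachable p q S T := by
  rw [Compat, Compat, labels_mergeBlocks hA, glueTP_mergeBlocks hA,
    (isCollapse_glueMap (sup_notMem_sdiff_of_nontrivial hp hA hA')).isAcyclic_map_iff
      isIndepSet_centers (pairwiseDisjoint_neighborSet_centers hp),
    pairwise_not_reachable_centers_iff, and_assoc]

theorem mergeBlocks_pair {S T U : Finset (Fin (k + 1))} (hU : U ∈ p) (hSU : S ≠ U) (hTU : T ≠ U) :
    mergeBlocks p {S, T} = insert (S ∪ T) (insert U (p \ {S, T, U})) := by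
  have hsdiff : p \ {S, T} = insert U (p \ {S, T, U}) := by grind
  rw [mergeBlocks, hsdiff, Finset.sup_insert, Finset.sup_singleton, id, id, Finset.sup_eq_union]

theorem mergeBlocks_triple {S T U : Finset (Fin (k + 1))} :
    mergeBlocks p {S, T, U} = insert (S ∪ T ∪ U) (p \ {S, T, U}) := by
  simp only [mergeBlocks, Finset.sup_insert, Finset.sup_singleton, id, Finset.sup_eq_union,
    Finset.union_assoc]

theorem compat_mergeBlocks_pair_iff
    (hp : (p : Set (Finset (Fin (k + 1)))).PairwiseDisjoint id) {S T : Finset (Fin (k + 1))}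
    (hS : S ∈ p) (hT : T ∈ p) (hne : S ≠ T) :
    Compat (mergeBlocks p {S, T}) q ↔ Compat p q ∧ ¬BlocksReachable p q S T := by
  rw [compat_mergeBlocks_iff hp (by grind) ⟨S, by simp, T, by simp, hne⟩, Finset.coe_pair,
    Set.pairwise_pair, blocksReachable_comm (S := T)]
  simp [hne]

theorem compat_mergeBlocks_triple_iff
    (hp : (p : Set (Finset (Fin (k + 1)))).PairwiseDisjoint id) {S T U : Finset (Fin (k + 1))}
    (hS : S ∈ p) (hT : T ∈ p) (hU : U ∈ p) (hST : S ≠ T) (hSU : S ≠ U) (hTU : T ≠ U) :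
    Compat (mergeBlocks p {S, T, U}) q ↔ Compat p q ∧ ¬BlocksReachable p q S T ∧
      ¬BlocksReachable p q S U ∧ ¬BlocksReachable p q T U := by
  rw [compat_mergeBlocks_iff hp (by grind) ⟨S, by simp, T, by simp, hST⟩, Finset.coe_insert,
    Finset.coe_pair, Set.pairwise_insert, Set.pairwise_pair, blocksReachable_comm (S := U)]
  simp [hST, hSU, hTU, blocksReachable_comm (T := S), and_comm, and_assoc]

open scoped Classical in
theorem even_countP_compat_mergeBlocks
    (hp : (p : Set (Finset (Fin (k + 1)))).PairwiseDisjoint id) {X Y Z : Finset (Fin (k + 1))}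
    (hX : X ∈ p) (hY : Y ∈ p) (hZ : Z ∈ p) (hXY : X ≠ Y) (hXZ : X ≠ Z) (hYZ : Y ≠ Z) :
    Even ([mergeBlocks p {X, Y}, mergeBlocks p {X, Z}, mergeBlocks p {Y, Z},
      mergeBlocks p {X, Y, Z}].countP fun r ↦ decide (Compat r q)) := by
  have hXYZ : BlocksReachable p q X Y → BlocksReachable p q Y Z → BlocksReachable p q X Z :=
    .trans
  have hYXZ : BlocksReachable p q X Y → BlocksReachable p q X Z → BlocksReachable p q Y Z :=
    fun h ↦ (blocksReachable_comm.1 h).trans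
  have hXZY : BlocksReachable p q X Z → BlocksReachable p q Y Z → BlocksReachable p q X Y :=
    fun h h' ↦ h.trans (blocksReachable_comm.1 h')
  simp only [List.countP_cons, List.countP_nil, decide_eq_true_eq,
    compat_mergeBlocks_pair_iff hp hX hY hXY, compat_mergeBlocks_pair_iff hp hX hZ hXZ,
    compat_mergeBlocks_pair_iff hp hY hZ hYZ,
    compat_mergeBlocks_triple_iff hp hX hY hZ hXY hXZ hYZ]
  grind

end MergeBlocks

open scoped Classical in
theorem even_compatible_of_swap_general {k : ℕ} {p : TWP k}
    (hp : (p : Set (Finset (Fin (k + 1)))).PairwiseDisjoint id)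
    {X Y Z : Finset (Fin (k + 1))} (hX : X ∈ p) (hY : Y ∈ p) (hZ : Z ∈ p)
    (hXY : X ≠ Y) (hXZ : X ≠ Z) (hYZ : Y ≠ Z) {p₁ p₂ p₃ p₄ : TWP k}
    (hp₁ : p₁ = insert (X ∪ Y) (insert Z (p \ {X, Y, Z})))
    (hp₂ : p₂ = insert (X ∪ Z) (insert Y (p \ {X, Y, Z})))
    (hp₃ : p₃ = insert (Y ∪ Z) (insert X (p \ {X, Y, Z})))
    (hp₄ : p₄ = insert (X ∪ Y ∪ Z) (p \ {X, Y, Z})) (q : TWP k) :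
    Even ([p₁, p₂, p₃, p₄].countP fun r ↦ decide (Compat r q)) ∧
      ([p₂, p₃, p₄].countP fun r ↦ decide (Compat r q)) % 2 = if Compat p₁ q then 1 else 0 := by
  have hmerge₁ : p₁ = mergeBlocks p {X, Y} := by rw [hp₁, mergeBlocks_pair hZ hXZ hYZ]
  have hmerge₂ : p₂ = mergeBlocks p {X, Z} := by
    rw [hp₂, mergeBlocks_pair hY hXY hYZ.symm, Finset.pair_comm Z Y]
  have hmerge₃ : p₃ = mergeBlocks p {Y, Z} := by
    rw [hp₃, mergeBlocks_pair hX hXY.symm hXZ.symm, Finset.pair_comm Z X, Finset.insert_comm Y X]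
  have hmerge₄ : p₄ = mergeBlocks p {X, Y, Z} := by rw [hp₄, mergeBlocks_triple]
  have heven : Even ([p₁, p₂, p₃, p₄].countP fun r ↦ decide (Compat r q)) := by
    rw [hmerge₁, hmerge₂, hmerge₃, hmerge₄]
    exact even_countP_compat_mergeBlocks hp hX hY hZ hXY hXZ hYZ
  refine ⟨heven, ?_⟩
  rw [List.countP_cons] at heven
  grind

open scoped Classical in
/-- Let `p` be a treewidth pattern with at least 3 blocks, `X, Y, Z`
three distinct blocks of `p`, `R = p ∖ {X, Y, Z}`, and `p₁ = R ∪ {X ∪ Y, Z}`,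
`p₂ = R ∪ {X ∪ Z, Y}`, `p₃ = R ∪ {Y ∪ Z, X}`, `p₄ = R ∪ {X ∪ Y ∪ Z}`.  Then for every
treewidth pattern `q`, the number of `i ∈ {1,2,3,4}` with `pᵢ ◁ q` is even; in particular
`{p₂, p₃, p₄}` represents `{p₁}`. -/
theorem even_compatible_of_swap {k : ℕ} (p : TWP k) (hp : IsTWPat p)
    (X Y Z : Finset (Fin (k + 1))) (hX : X ∈ p) (hY : Y ∈ p) (hZ : Z ∈ p)
    (hXY : X ≠ Y) (hXZ : X ≠ Z) (hYZ : Y ≠ Z) (hcard : 3 ≤ p.card)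
    (p₁ p₂ p₃ p₄ : TWP k)
    (hp₁ : p₁ = insert (X ∪ Y) (insert Z (p \ {X, Y, Z})))
    (hp₂ : p₂ = insert (X ∪ Z) (insert Y (p \ {X, Y, Z})))
    (hp₃ : p₃ = insert (Y ∪ Z) (insert X (p \ {X, Y, Z})))
    (hp₄ : p₄ = insert (X ∪ Y ∪ Z) (p \ {X, Y, Z})) :
    ∀ q : TWP k, IsTWPat q →
      Even (([p₁, p₂, p₃, p₄].countP fun pp => decide (Compat pp q)) : ℕ) ∧
      ([p₂, p₃, p₄].countP fun pp => decide (Compat pp q)) % 2 =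
        (if Compat p₁ q then 1 else 0) := by
  exact fun q _ ↦ even_compatible_of_swap_general
    (fun S hS T hT ↦ hp.2.1 S hS T hT) hX hY hZ hXY hXZ hYZ hp₁ hp₂ hp₃ hp₄ q
end

section
/- Let S₁, S₂, R₁, R₂ be finite families of treewidth patterns such that R₁ represents S₁ and R₂ represents S₂. Then R₁ ⋈̂ R₂ represents S₁ ⋈̂ S₂, where the exclusive join A ⋈̂ B of two families is the set of treewidth patterns p such that the number of pairs (p₁, p₂) ∈ A × B with p₁ ⋈ p₂ = p is odd. -/
open scoped Classical in
/-- The exclusive join `A ⋈̂ B`: the set of patterns `p` such that the number of pairs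
`(p₁, p₂) ∈ A × B` with `p₁ ⋈ p₂ = p` is odd (`⊥` excluded). -/
noncomputable def exJoin {k : ℕ} (A B : Finset (TWP k)) : Finset (TWP k) :=
  ((A ×ˢ B).biUnion fun q => (joinTP q.1 q.2).toFinset).filter fun pp =>
    ((A ×ˢ B).filter fun q => joinTP q.1 q.2 = some pp).card % 2 = 1

/-!
Call labels linked when they lie in one component of a glueing. By Euler's formula the incidence
graph of a family of blocks is acyclic iff the number of labels equals the sum of `|S| - 1` over
the blocks `S` plus the number of linkage classes. The blocks of `p ⋈ q` are disjoint, hence form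
a forest, and link the same labels as `p` and `q` together. Counting therefore shows that
`p ◁ q` and `p ⋈ q ◁ r` both hold iff the glueing of all three patterns is acyclic, a condition
symmetric in `p`, `q`, `r`.

Modulo 2, the number of patterns in `A ⋈̂ B` compatible with `r` is the number of pairs
`(p, q) ∈ A × B` such that `p`, `q`, `r` glue acyclically. For a fixed `q` with `q ◁ r` this asks
that `p ◁ q ⋈ r`, so the parity of the number of such `p` is unchanged when `A` is replaced by a
family it represents. By symmetry the same holds for `B`.
-/

section Forest

open SimpleGraph

variable {V : Type*} [Finite V] {G : SimpleGraph V}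

lemma card_edgeSet_eq_sum_card_edgeSet_toSimpleGraph (G : SimpleGraph V)
    [Fintype G.ConnectedComponent] :
    Nat.card G.edgeSet = ∑ c : G.ConnectedComponent, Nat.card c.toSimpleGraph.edgeSet := by
  let toEdge (x : Σ c : G.ConnectedComponent, c.toSimpleGraph.edgeSet) : G.edgeSet :=
    x.1.toSimpleGraph_hom.mapEdgeSet x.2
  have toEdge_injective : Function.Injective toEdge := by
    rintro ⟨c, ⟨⟨u, v⟩, huv⟩⟩ ⟨d, ⟨⟨x, y⟩, hxy⟩⟩ h
    have hval : s(u.1, v.1) = s(x.1, y.1) := congrArg Subtype.val h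
    obtain rfl : c = d := by
      rcases Sym2.eq_iff.1 hval with ⟨h, -⟩ | ⟨h, -⟩
      · exact ConnectedComponent.eq_of_common_vertex u.2 (h ▸ x.2)
      · exact ConnectedComponent.eq_of_common_vertex u.2 (h ▸ y.2)
    have : s(u, v) = s(x, y) := Sym2.map.injective Subtype.val_injective hval
    simp only [this]
  have toEdge_surjective : Function.Surjective toEdge := by
    rintro ⟨⟨u, v⟩, huv⟩
    have hv : v ∈ G.connectedComponentMk u :=
      (ConnectedComponent.connectedComponentMk_eq_of_adj huv).symm
    exact ⟨⟨G.connectedComponentMk u, s(⟨u, rfl⟩, ⟨v, hv⟩), huv⟩, rfl⟩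
  rw [← Nat.card_congr (Equiv.ofBijective toEdge ⟨toEdge_injective, toEdge_surjective⟩),
    Nat.card_sigma]

lemma card_eq_card_edgeSet_add_card_connectedComponent (hG : G.IsAcyclic) :
    Nat.card V = Nat.card G.edgeSet + Nat.card G.ConnectedComponent := by
  have := Fintype.ofFinite G.ConnectedComponent
  have card_tree (c : G.ConnectedComponent) : Nat.card c = Nat.card c.toSimpleGraph.edgeSet + 1 :=
    (isTree_iff_connected_and_card.1 (hG.isTree_connectedComponent c)).2.symm
  calc
    Nat.card V = ∑ c : G.ConnectedComponent, Nat.card c := by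
      rw [← Nat.card_sigma]
      exact Nat.card_congr (Equiv.sigmaFiberEquiv G.connectedComponentMk).symm
    _ = _ := by
      simp_rw [card_tree, Finset.sum_add_distrib, card_edgeSet_eq_sum_card_edgeSet_toSimpleGraph G]
      simp

lemma exists_le_isAcyclic_card_eq (G : SimpleGraph V) :
    ∃ F ≤ G, F.IsAcyclic ∧
      Nat.card V = Nat.card F.edgeSet + Nat.card G.ConnectedComponent := by
  obtain ⟨F, hle, hF, hreach⟩ := G.exists_isAcyclic_reachable_eq_le
  refine ⟨F, hle, hF, (card_eq_card_edgeSet_add_card_connectedComponent hF).trans ?_⟩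
  rw [ConnectedComponent, ConnectedComponent, hreach]

lemma card_le_card_edgeSet_add_card_connectedComponent (G : SimpleGraph V) :
    Nat.card V ≤ Nat.card G.edgeSet + Nat.card G.ConnectedComponent := by
  obtain ⟨F, hle, -, hcard⟩ := exists_le_isAcyclic_card_eq G
  rw [hcard]
  gcongr
  exact Nat.card_mono (Set.toFinite _) (edgeSet_subset_edgeSet.2 hle)

lemma isAcyclic_iff_card_eq_card_edgeSet_add_card_connectedComponent :
    G.IsAcyclic ↔ Nat.card V = Nat.card G.edgeSet + Nat.card G.ConnectedComponent := by
  refine ⟨card_eq_card_edgeSet_add_card_connectedComponent, fun hcardG ↦ ?_⟩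
  obtain ⟨F, hle, hF, hcardF⟩ := exists_le_isAcyclic_card_eq G
  have hncard : G.edgeSet.ncard ≤ F.edgeSet.ncard := by
    simp only [← Nat.card_coe_set_eq]
    omega
  have hFG : F.edgeSet = G.edgeSet :=
    Set.eq_of_subset_of_ncard_le (edgeSet_subset_edgeSet.2 hle) hncard
  exact edgeSet_inj.1 hFG ▸ hF

end Forest

section Incidence

variable {α ι μ κ : Type*}

/-- The incidence graph of a family of blocks: a point `a` is adjacent to a block `i` when
`a ∈ B i`. The glueing of the canonical forests of several patterns is the incidence graph of the
family of all their blocks, indexed by a sum type so that equal blocks keep separate star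
centers. -/
def incidenceGraph (B : ι → Finset α) : SimpleGraph (α ⊕ ι) :=
  SimpleGraph.fromRel fun x y ↦ ∃ a i, x = Sum.inl a ∧ y = Sum.inr i ∧ a ∈ B i

lemma incidenceGraph_adj_inl {B : ι → Finset α} {a : α} {x : α ⊕ ι} :
    (incidenceGraph B).Adj (Sum.inl a) x ↔ ∃ i, x = Sum.inr i ∧ a ∈ B i := by
  rcases x with b | i <;> simp [incidenceGraph]

lemma incidenceGraph_adj_inr {B : ι → Finset α} {i : ι} {x : α ⊕ ι} :
    (incidenceGraph B).Adj (Sum.inr i) x ↔ ∃ a, x = Sum.inl a ∧ a ∈ B i := by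
  rcases x with b | i <;> simp [incidenceGraph]

lemma isAcyclic_incidenceGraph_of_pairwise_disjoint {B : ι → Finset α}
    (hB : Pairwise fun i j ↦ Disjoint (B i) (B j)) : (incidenceGraph B).IsAcyclic := by
  -- Deleting the edge from a point to its only block isolates the point.
  have bridge (a : α) (i : ι) (hai : a ∈ B i) : (incidenceGraph B).IsBridge s(.inl a, .inr i) := by
    rw [SimpleGraph.isBridge_iff]
    rintro ⟨w⟩
    cases w with
    | cons hadj _ =>
      rw [SimpleGraph.deleteEdges_adj, incidenceGraph_adj_inl] at hadj
      obtain ⟨⟨j, rfl, haj⟩, hne⟩ := hadj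
      obtain rfl : i = j := hB.eq (Finset.not_disjoint_iff.2 ⟨a, hai, haj⟩)
      exact hne rfl
  rw [SimpleGraph.isAcyclic_iff_forall_adj_isBridge]
  rintro (a | i) y hxy
  · obtain ⟨i, rfl, hai⟩ := incidenceGraph_adj_inl.1 hxy
    exact bridge a i hai
  · obtain ⟨a, rfl, hai⟩ := incidenceGraph_adj_inr.1 hxy
    exact Sym2.eq_swap ▸ bridge a i hai

/-- The least equivalence relation on points for which every block lies in one class, encoded as
reachability in the incidence graph. -/
def linkage (B : ι → Finset α) : Setoid α :=
  (incidenceGraph B).reachableSetoid.comap Sum.inl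

lemma linkage_of_mem {B : ι → Finset α} {i : ι} {a b : α} (ha : a ∈ B i) (hb : b ∈ B i) :
    linkage B a b :=
  (incidenceGraph_adj_inl.2 ⟨i, rfl, ha⟩).reachable.trans
    (incidenceGraph_adj_inr.2 ⟨b, rfl, hb⟩).reachable

lemma linkage_le_iff {B : ι → Finset α} {s : Setoid α} :
    linkage B ≤ s ↔ ∀ i, ∀ a ∈ B i, ∀ b ∈ B i, s a b := by
  refine ⟨fun h i a ha b hb ↦ h (linkage_of_mem ha hb), fun h a b hab ↦ ?_⟩
  have related_of_reachable (x : α ⊕ ι) (hx : (incidenceGraph B).Reachable (.inl a) x) :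
      Sum.elim (s a) (fun i ↦ ∀ c ∈ B i, s a c) x := by
    rw [SimpleGraph.reachable_iff_reflTransGen] at hx
    induction hx with
    | refl => exact s.refl a
    | @tail x _ _ hxy ih =>
      rcases x with c | i
      · obtain ⟨i, rfl, hci⟩ := incidenceGraph_adj_inl.1 hxy
        exact fun d hdi ↦ s.trans ih (h i c hci d hdi)
      · obtain ⟨c, rfl, hci⟩ := incidenceGraph_adj_inr.1 hxy
        exact ih c hci
  exact related_of_reachable _ hab

lemma linkage_sumElim (B : ι → Finset α) (C : κ → Finset α) :
    linkage (Sum.elim B C) = linkage B ⊔ linkage C :=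
  eq_of_forall_ge_iff fun s ↦ by simp [linkage_le_iff]

lemma eq_inr_of_reachable_incidenceGraph {B : ι → Finset α} {i : ι} (hi : B i = ∅) {x : α ⊕ ι}
    (h : (incidenceGraph B).Reachable (.inr i) x) : x = .inr i := by
  obtain ⟨w⟩ := h
  cases w with
  | nil => rfl
  | cons hadj _ =>
    obtain ⟨a, -, ha⟩ := incidenceGraph_adj_inr.1 hadj
    simp [hi] at ha

open SimpleGraph in
lemma card_connectedComponent_incidenceGraph [Finite α] [Finite ι] (B : ι → Finset α) :
    Nat.card (incidenceGraph B).ConnectedComponent =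
      Nat.card (Quotient (linkage B)) + Nat.card {i // B i = ∅} := by
  let G := incidenceGraph B
  let component : Quotient (linkage B) ⊕ {i // B i = ∅} → G.ConnectedComponent :=
    Sum.elim (Quotient.lift (fun a ↦ G.connectedComponentMk (.inl a))
      fun _ _ h ↦ ConnectedComponent.sound h) (fun i ↦ G.connectedComponentMk (.inr i.1))
  have component_injective : Function.Injective component := by
    rintro (⟨⟨a⟩⟩ | ⟨i, hi⟩) (⟨⟨b⟩⟩ | ⟨j, hj⟩) h
    · exact congrArg Sum.inl (Quotient.sound (ConnectedComponent.exact h))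
    · cases eq_inr_of_reachable_incidenceGraph hj (ConnectedComponent.exact h).symm
    · cases eq_inr_of_reachable_incidenceGraph hi (ConnectedComponent.exact h)
    · cases eq_inr_of_reachable_incidenceGraph hi (ConnectedComponent.exact h)
      rfl
  have component_surjective : Function.Surjective component := by
    rintro ⟨a | i⟩
    · exact ⟨.inl ⟦a⟧, rfl⟩
    · rcases (B i).eq_empty_or_nonempty with hi | ⟨a, ha⟩
      · exact ⟨.inr ⟨i, hi⟩, rfl⟩
      · exact ⟨.inl ⟦a⟧, ConnectedComponent.connectedComponentMk_eq_of_adj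
          (incidenceGraph_adj_inl.2 ⟨i, rfl, ha⟩)⟩
  rw [← Nat.card_congr (Equiv.ofBijective component ⟨component_injective, component_surjective⟩),
    Nat.card_sum]

lemma card_edgeSet_incidenceGraph [Fintype ι] (B : ι → Finset α) :
    Nat.card (incidenceGraph B).edgeSet = ∑ i, (B i).card := by
  let edge (x : Σ i, B i) : (incidenceGraph B).edgeSet :=
    ⟨s(.inl x.2.1, .inr x.1), incidenceGraph_adj_inl.2 ⟨x.1, rfl, x.2.2⟩⟩
  have edge_injective : Function.Injective edge := by
    rintro ⟨i, a, ha⟩ ⟨j, b, hb⟩ h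
    have hval : s(Sum.inl a, Sum.inr i) = s(Sum.inl b, Sum.inr j) := congrArg Subtype.val h
    obtain ⟨rfl, rfl⟩ : a = b ∧ i = j := by simpa using hval
    rfl
  have edge_surjective : Function.Surjective edge := by
    rintro ⟨⟨a | i, y⟩, hxy⟩
    · obtain ⟨i, rfl, ha⟩ := incidenceGraph_adj_inl.1 hxy
      exact ⟨⟨i, a, ha⟩, rfl⟩
    · obtain ⟨a, rfl, ha⟩ := incidenceGraph_adj_inr.1 hxy
      exact ⟨⟨i, a, ha⟩, Subtype.ext Sym2.eq_swap⟩
  rw [← Nat.card_congr (Equiv.ofBijective edge ⟨edge_injective, edge_surjective⟩), Nat.card_sigma]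
  simp

/-- The sum of `|B i| - 1` over the blocks, the number of merges of classes needed to build the
linkage when no merge is wasted. By truncation an empty block contributes `0`. -/
def excess [Fintype ι] (B : ι → Finset α) : ℕ := ∑ i, ((B i).card - 1)

lemma excess_sumElim [Fintype ι] [Fintype κ] (B : ι → Finset α) (C : κ → Finset α) :
    excess (Sum.elim B C) = excess B + excess C := by
  simp [excess]

lemma excess_add_card [Fintype ι] (B : ι → Finset α) :
    excess B + Nat.card ι = (∑ i, (B i).card) + Nat.card {i // B i = ∅} := by
  classical
  rw [excess, Nat.card_eq_fintype_card, ← Finset.card_univ, Finset.card_eq_sum_ones,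
    ← Finset.sum_add_distrib, Nat.card_eq_fintype_card, Fintype.card_subtype, Finset.card_filter,
    ← Finset.sum_add_distrib]
  refine Finset.sum_congr rfl fun i _ ↦ ?_
  rcases (B i).eq_empty_or_nonempty with hi | hi
  · simp [hi]
  · have := hi.card_pos
    rw [if_neg hi.ne_empty]
    omega

lemma card_le_excess_add_card_quotient [Finite α] [Fintype ι] (B : ι → Finset α) :
    Nat.card α ≤ excess B + Nat.card (Quotient (linkage B)) := by
  have euler := card_le_card_edgeSet_add_card_connectedComponent (incidenceGraph B)
  rw [card_edgeSet_incidenceGraph, card_connectedComponent_incidenceGraph, Nat.card_sum] at euler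
  have := excess_add_card B
  omega

lemma isAcyclic_incidenceGraph_iff_card_eq [Finite α] [Fintype ι] {B : ι → Finset α} :
    (incidenceGraph B).IsAcyclic ↔
      Nat.card α = excess B + Nat.card (Quotient (linkage B)) := by
  rw [isAcyclic_iff_card_eq_card_edgeSet_add_card_connectedComponent,
    card_edgeSet_incidenceGraph, card_connectedComponent_incidenceGraph, Nat.card_sum]
  have := excess_add_card B
  omega

lemma isAcyclic_incidenceGraph_sumElim_iff [Finite α] [Finite ι] [Finite μ] [Finite κ]
    {B : ι → Finset α} {J : μ → Finset α} (hJ : (incidenceGraph J).IsAcyclic)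
    (hJB : linkage J = linkage B) (C : κ → Finset α) :
    (incidenceGraph (Sum.elim B C)).IsAcyclic ↔
      (incidenceGraph B).IsAcyclic ∧ (incidenceGraph (Sum.elim J C)).IsAcyclic := by
  have := Fintype.ofFinite ι
  have := Fintype.ofFinite μ
  have := Fintype.ofFinite κ
  have leB := card_le_excess_add_card_quotient B
  have leJC := card_le_excess_add_card_quotient (Sum.elim J C)
  simp only [isAcyclic_incidenceGraph_iff_card_eq, excess_sumElim, linkage_sumElim, hJB]
    at hJ leJC ⊢
  omega

lemma isAcyclic_incidenceGraph_comp_equiv (B : κ → Finset α) (e : ι ≃ κ) :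
    (incidenceGraph (B ∘ e)).IsAcyclic ↔ (incidenceGraph B).IsAcyclic :=
  SimpleGraph.Iso.isAcyclic_iff
    { toEquiv := (Equiv.refl α).sumCongr e
      map_rel_iff' := by rintro (a | i) (b | j) <;> simp [incidenceGraph] }

end Incidence

section Classes

variable {α ι : Type*} {s : Setoid α} {L S : Finset α}

/-- A set system viewed as a family of blocks indexed by itself. -/
abbrev blocks (P : Finset (Finset α)) : {S // S ∈ P} → Finset α := Subtype.val

open scoped Classical in
/-- The traces on `L` of the classes of `s` that meet `L`. -/
noncomputable def classesOn (s : Setoid α) (L : Finset α) : Finset (Finset α) :=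
  L.image fun a ↦ L.filter (s a)

lemma mem_classesOn : S ∈ classesOn s L ↔ ∃ a ∈ L, ∀ b, b ∈ S ↔ b ∈ L ∧ s a b := by
  simp [classesOn, Finset.ext_iff, iff_comm]

lemma exists_mem_classesOn_mem_iff {a : α} : (∃ S ∈ classesOn s L, a ∈ S) ↔ a ∈ L := by
  classical
  refine ⟨fun ⟨S, hS, haS⟩ ↦ ?_, fun ha ↦ ?_⟩
  · obtain ⟨b, -, hb⟩ := mem_classesOn.1 hS
    exact ((hb a).1 haS).1
  · exact ⟨L.filter (s a), Finset.mem_image_of_mem _ ha, Finset.mem_filter.2 ⟨ha, s.refl a⟩⟩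

lemma nonempty_of_mem_classesOn (hS : S ∈ classesOn s L) : S.Nonempty := by
  obtain ⟨a, ha, h⟩ := mem_classesOn.1 hS
  exact ⟨a, (h a).2 ⟨ha, s.refl a⟩⟩

lemma pairwiseDisjoint_classesOn (s : Setoid α) (L : Finset α) :
    (classesOn s L : Set (Finset α)).PairwiseDisjoint id := by
  intro S hS T hT hST
  obtain ⟨a, -, ha⟩ := mem_classesOn.1 hS
  obtain ⟨b, -, hb⟩ := mem_classesOn.1 hT
  refine Finset.disjoint_left.2 fun c hcS hcT ↦ hST (Finset.ext fun d ↦ ?_)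
  have hab : s a b := s.trans ((ha c).1 hcS).2 (s.symm ((hb c).1 hcT).2)
  rw [ha, hb]
  exact and_congr_right fun _ ↦ ⟨s.trans (s.symm hab), s.trans hab⟩

lemma isAcyclic_incidenceGraph_classesOn (s : Setoid α) (L : Finset α) :
    (incidenceGraph (blocks (classesOn s L))).IsAcyclic :=
  isAcyclic_incidenceGraph_of_pairwise_disjoint fun S T hST ↦
    pairwiseDisjoint_classesOn s L S.2 T.2 (Subtype.coe_injective.ne hST)

lemma linkage_classesOn {B : ι → Finset α} (hB : ∀ i, B i ⊆ L) :
    linkage (blocks (classesOn (linkage B) L)) = linkage B := by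
  classical
  refine le_antisymm (linkage_le_iff.2 ?_) (linkage_le_iff.2 fun i a ha b hb ↦ ?_)
  · rintro ⟨S, hS⟩ a ha b hb
    obtain ⟨c, -, hc⟩ := mem_classesOn.1 hS
    exact (linkage B).trans ((linkage B).symm ((hc a).1 ha).2) ((hc b).1 hb).2
  · have mem_class {c : α} (hc : c ∈ B i) : c ∈ L.filter (linkage B a) :=
      Finset.mem_filter.2 ⟨hB i hc, linkage_of_mem ha hc⟩
    exact linkage_of_mem (B := blocks (classesOn (linkage B) L))
      (i := ⟨L.filter (linkage B a), Finset.mem_image_of_mem _ (hB i ha)⟩)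
      (mem_class ha) (mem_class hb)

end Classes

section Parity

lemma card_filter_mod_two_eq_one_modEq {γ : Type*} (s : Finset γ) (f : γ → ℕ) :
    (s.filter fun c ↦ f c % 2 = 1).card ≡ ∑ c ∈ s, f c [MOD 2] := by
  have indicator (n : ℕ) : (if n % 2 = 1 then 1 else 0) = n % 2 := by grind
  rw [Nat.ModEq, Finset.card_filter, Finset.sum_nat_mod s 2 f]
  simp_rw [indicator]

open Finset in
lemma card_filter_odd_fibers_modEq {β γ : Type*} [DecidableEq γ] (f : β → Option γ)
    (A : Finset β) (P : γ → Prop) [DecidablePred P] [DecidablePred fun x ↦ ∃ c ∈ f x, P c] :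
    #{c ∈ {c ∈ A.biUnion fun x ↦ (f x).toFinset | #{x ∈ A | f x = some c} % 2 = 1} | P c} ≡
      #{x ∈ A | ∃ c ∈ f x, P c} [MOD 2] := by
  classical
  have disjoint_fibers (c d : γ) (hcd : c ≠ d) :
      Disjoint {x ∈ A | f x = some c} {x ∈ A | f x = some d} :=
    disjoint_filter.2 fun x _ hc hd ↦ hcd (Option.some.inj (hc.symm.trans hd))
  have biUnion_fibers : {c ∈ A.biUnion fun x ↦ (f x).toFinset | P c}.biUnion
      (fun c ↦ {x ∈ A | f x = some c}) = {x ∈ A | ∃ c ∈ f x, P c} := by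
    ext x
    simp only [mem_biUnion, mem_filter, Option.mem_toFinset, Option.mem_def]
    grind
  rw [filter_comm, ← biUnion_fibers, card_biUnion fun c _ d _ ↦ disjoint_fibers c d]
  exact card_filter_mod_two_eq_one_modEq _ _

end Parity

section Patterns

variable {k : ℕ} {p q r : TWP k}

lemma mem_labels {a : Fin (k + 1)} : a ∈ labels p ↔ ∃ S ∈ p, a ∈ S := by
  simp [labels, Finset.mem_sup]

lemma subset_labels {S : Finset (Fin (k + 1))} (hS : S ∈ p) : S ⊆ labels p :=
  Finset.le_sup (f := id) hS

lemma glueTP_eq_incidenceGraph (p q : TWP k) :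
    glueTP p q = incidenceGraph (Sum.elim (blocks p) (blocks q)) := by
  ext (a | S | S) (b | T | T) <;> simp [glueTP, incidenceGraph, -Subtype.exists]

lemma reachable_glueTP_iff {a b : Fin (k + 1)} :
    (glueTP p q).Reachable (.inl a) (.inl b) ↔
      linkage (Sum.elim (blocks p) (blocks q)) a b := by
  rw [glueTP_eq_incidenceGraph]
  rfl

lemma compat_iff : Compat p q ↔ labels p = labels q ∧
    (incidenceGraph (Sum.elim (blocks p) (blocks q))).IsAcyclic := by
  rw [Compat, glueTP_eq_incidenceGraph]

lemma compat_comm : Compat p q ↔ Compat q p := by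
  have swap : Sum.elim (blocks p) (blocks q) =
      Sum.elim (blocks q) (blocks p) ∘ Equiv.sumComm _ _ := by
    ext (S | S) <;> rfl
  rw [compat_iff, compat_iff, swap, isAcyclic_incidenceGraph_comp_equiv, eq_comm]

/-- The value of the join `p ⋈ q` when it is not `⊥`: the classes of labels connected in the
glueing of `p` and `q`. It is defined for all `p` and `q`, and meaningful when they are
compatible. -/
noncomputable def joinPattern (p q : TWP k) : TWP k :=
  classesOn (linkage (Sum.elim (blocks p) (blocks q))) (labels p)

lemma joinTP_eq_some_iff {j : TWP k} :
    joinTP p q = some j ↔ Compat p q ∧ joinPattern p q = j := by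
  simp only [joinTP, Compat, Option.ite_none_right_eq_some, Option.some.injEq, joinPattern,
    classesOn]
  congr!
  exact reachable_glueTP_iff

lemma labels_joinPattern (p q : TWP k) : labels (joinPattern p q) = labels p := by
  ext a
  rw [mem_labels, joinPattern, exists_mem_classesOn_mem_iff]

lemma isTWPat_joinPattern (hp : 0 ∈ labels p) (q : TWP k) : IsTWPat (joinPattern p q) :=
  ⟨fun _ ↦ nonempty_of_mem_classesOn, fun _ hS _ hT ↦ pairwiseDisjoint_classesOn _ _ hS hT,
    mem_labels.1 ((labels_joinPattern p q).symm ▸ hp)⟩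

lemma linkage_joinPattern (h : labels p = labels q) :
    linkage (blocks (joinPattern p q)) = linkage (Sum.elim (blocks p) (blocks q)) := by
  apply linkage_classesOn
  rintro (S | S)
  · exact subset_labels S.2
  · exact h ▸ subset_labels S.2

/-- The three patterns have the same labels and the simultaneous glueing of their canonical
forests is acyclic. -/
def JointlyCompat (p q r : TWP k) : Prop :=
  labels p = labels q ∧ labels q = labels r ∧
    (incidenceGraph (Sum.elim (Sum.elim (blocks p) (blocks q)) (blocks r))).IsAcyclic

lemma jointlyCompat_swap : JointlyCompat p q r ↔ JointlyCompat q p r := by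
  have swap : Sum.elim (Sum.elim (blocks p) (blocks q)) (blocks r) =
      Sum.elim (Sum.elim (blocks q) (blocks p)) (blocks r) ∘
        (Equiv.sumComm _ _).sumCongr (Equiv.refl _) := by
    ext ((S | S) | S) <;> rfl
  rw [JointlyCompat, JointlyCompat, swap, isAcyclic_incidenceGraph_comp_equiv]
  grind

lemma jointlyCompat_rotate : JointlyCompat p q r ↔ JointlyCompat q r p := by
  have rotate : Sum.elim (Sum.elim (blocks p) (blocks q)) (blocks r) =
      Sum.elim (Sum.elim (blocks q) (blocks r)) (blocks p) ∘
        (Equiv.sumAssoc _ _ _).trans (Equiv.sumComm _ _) := by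
    ext ((S | S) | S) <;> rfl
  rw [JointlyCompat, JointlyCompat, rotate, isAcyclic_incidenceGraph_comp_equiv]
  grind

lemma jointlyCompat_iff_compat_joinPattern_left :
    JointlyCompat p q r ↔ Compat p q ∧ Compat (joinPattern p q) r := by
  simp only [JointlyCompat, compat_iff, labels_joinPattern, and_assoc]
  refine and_congr_right fun hpq ↦ ?_
  have join_acyclic : (incidenceGraph (blocks (joinPattern p q))).IsAcyclic :=
    isAcyclic_incidenceGraph_classesOn _ _
  rw [isAcyclic_incidenceGraph_sumElim_iff join_acyclic (linkage_joinPattern hpq), ← hpq]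
  exact and_left_comm

lemma jointlyCompat_iff_compat_joinPattern_right :
    JointlyCompat p q r ↔ Compat q r ∧ Compat p (joinPattern q r) := by
  rw [jointlyCompat_rotate, jointlyCompat_iff_compat_joinPattern_left, compat_comm (p := p)]

end Patterns

section Representation

open Finset

variable {k : ℕ} {A B C R S : Finset (TWP k)} {r : TWP k}

lemma Represents.trans (hAB : Represents A B) (hBC : Represents B C) : Represents A C :=
  fun r hr ↦ (hAB r hr).trans (hBC r hr)

open scoped Classical in
lemma Represents.card_jointlyCompat_modEq (h : Represents R S) (hr : IsTWPat r) (q : TWP k) :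
    #{p ∈ R | JointlyCompat p q r} ≡ #{p ∈ S | JointlyCompat p q r} [MOD 2] := by
  simp only [jointlyCompat_iff_compat_joinPattern_right]
  by_cases hqr : Compat q r
  · have zero_mem : 0 ∈ labels q := hqr.1 ▸ mem_labels.2 hr.2.2
    simp only [hqr, true_and]
    exact h _ (isTWPat_joinPattern zero_mem r)
  · simp [hqr, Nat.ModEq.rfl]

open scoped Classical in
lemma card_compat_exJoin_modEq (A B : Finset (TWP k)) (r : TWP k) :
    #{p ∈ exJoin A B | Compat p r} ≡
      ∑ q ∈ B, #{p ∈ A | JointlyCompat p q r} [MOD 2] := by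
  have exists_join_compat (x : TWP k × TWP k) :
      (∃ j ∈ joinTP x.1 x.2, Compat j r) ↔ JointlyCompat x.1 x.2 r := by
    simp [joinTP_eq_some_iff, jointlyCompat_iff_compat_joinPattern_left, and_assoc]
  have odd_fibers :=
    card_filter_odd_fibers_modEq (fun x : TWP k × TWP k ↦ joinTP x.1 x.2) (A ×ˢ B) (Compat · r)
  simp only [exists_join_compat] at odd_fibers
  have pairs : #{x ∈ A ×ˢ B | JointlyCompat x.1 x.2 r} =
      ∑ q ∈ B, #{p ∈ A | JointlyCompat p q r} := by
    simp only [card_filter, sum_product_right]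
  exact pairs ▸ odd_fibers

lemma represents_exJoin_comm (A B : Finset (TWP k)) : Represents (exJoin A B) (exJoin B A) := by
  classical
  intro r _
  calc
    #{p ∈ exJoin A B | Compat p r} ≡ ∑ q ∈ B, #{p ∈ A | JointlyCompat p q r} [MOD 2] :=
      card_compat_exJoin_modEq A B r
    _ = ∑ p ∈ A, #{q ∈ B | JointlyCompat q p r} := by
      simp only [card_filter]
      rw [sum_comm]
      exact sum_congr rfl fun p _ ↦ sum_congr rfl fun q _ ↦ if_congr jointlyCompat_swap rfl rfl
    _ ≡ #{p ∈ exJoin B A | Compat p r} [MOD 2] := (card_compat_exJoin_modEq B A r).symm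

lemma Represents.exJoin_right (h : Represents R S) (B : Finset (TWP k)) :
    Represents (exJoin R B) (exJoin S B) := by
  classical
  intro r hr
  calc
    #{p ∈ exJoin R B | Compat p r} ≡ ∑ q ∈ B, #{p ∈ R | JointlyCompat p q r} [MOD 2] :=
      card_compat_exJoin_modEq R B r
    _ ≡ ∑ q ∈ B, #{p ∈ S | JointlyCompat p q r} [MOD 2] :=
      Nat.ModEq.sum fun q _ ↦ h.card_jointlyCompat_modEq hr q
    _ ≡ #{p ∈ exJoin S B | Compat p r} [MOD 2] := (card_compat_exJoin_modEq S B r).symm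

end Representation

theorem exclusive_join_preserves_representation_general {k : ℕ} {S₁ S₂ R₁ R₂ : Finset (TWP k)}
    (h₁ : Represents R₁ S₁) (h₂ : Represents R₂ S₂) :
    Represents (exJoin R₁ R₂) (exJoin S₁ S₂) :=
  (h₁.exJoin_right R₂).trans <| (represents_exJoin_comm S₁ R₂).trans <|
    (h₂.exJoin_right S₁).trans (represents_exJoin_comm S₂ S₁)

/-- If `R₁` represents `S₁` and `R₂` represents `S₂`, then the exclusive
join `R₁ ⋈̂ R₂` represents `S₁ ⋈̂ S₂`. -/
theorem exclusive_join_preserves_representation {k : ℕ}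
    (S₁ S₂ R₁ R₂ : Finset (TWP k))
    (hS₁ : ∀ p ∈ S₁, IsTWPat p) (hS₂ : ∀ p ∈ S₂, IsTWPat p)
    (hR₁ : ∀ p ∈ R₁, IsTWPat p) (hR₂ : ∀ p ∈ R₂, IsTWPat p)
    (h₁ : Represents R₁ S₁) (h₂ : Represents R₂ S₂) :
    Represents (exJoin R₁ R₂) (exJoin S₁ S₂) :=
  exclusive_join_preserves_representation_general h₁ h₂
end
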